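/- arXiv:1703.07871 — 9 statements merged into one kernel-verified Lean document; each statement's English description precedes it below -/
import Mathlib

section
/- For every k ≥ 1, every set S in the distinguished family 𝒮(G_k) of the Burling graph G_k is a stable (independent) set of G_k. -/
/-!
The proof is by induction along the construction. A set of the new family is the union of a
distinguished set `S` of the master copy with either a distinguished set `X` of the copy `H_S` or
the single vertex `v_{S,X}`. There are no edges between the master copy and the rest, so an edge
inside such a union would be an edge inside `S`, an edge inside `X`, or a loop at `v_{S,X}`.
The first two are excluded by the induction hypothesis (`not_burlingRel_of_mem`).
-/

/-- Vertex type of the inductive step of the Burling construction: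
given the vertex type `V` of the previous Burling graph and its distinguished
family `F` of vertex subsets, the new vertex set consists of the `master' copy
(`Sum.inl`), and for each `S ∈ F` a fresh copy `H_S` of the previous graph
(vertices `Sum.inr (S, Sum.inl v)`) together with, for each `X ∈ F`
(i.e. each distinguished set of `H_S`), a new vertex `v_{S,X}`
(namely `Sum.inr (S, Sum.inr X)`). -/
abbrev BurlingVertexStep (V : Type) (F : Set (Set V)) : Type :=
  V ⊕ (↥F × (V ⊕ ↥F))

/-- Adjacency (before symmetrization) for the inductive step: the master copy keeps its
edges, each copy `H_S` keeps its edges, and the new vertex `v_{S,X}` is joined exactly to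
the vertices of `X` inside the copy `H_S`. -/
def BurlingRel {V : Type} (G : SimpleGraph V) (F : Set (Set V)) :
    BurlingVertexStep V F → BurlingVertexStep V F → Prop
  | Sum.inl u, Sum.inl v => G.Adj u v
  | Sum.inr (S, Sum.inl u), Sum.inr (S', Sum.inl v) => S = S' ∧ G.Adj u v
  | Sum.inr (S, Sum.inr X), Sum.inr (S', Sum.inl v) => S = S' ∧ v ∈ (X : Set V)
  | _, _ => False

/-- The distinguished family for the inductive step: for each `S ∈ F` and `X ∈ F`
(thought of as a distinguished set of the copy `H_S`), the sets `S ∪ X` and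
`S ∪ {v_{S,X}}`. -/
def BurlingFam {V : Type} (F : Set (Set V)) : Set (Set (BurlingVertexStep V F)) :=
  {A | ∃ S X : ↥F,
    A = Sum.inl '' (S : Set V) ∪ (fun v => Sum.inr (S, Sum.inl v)) '' (X : Set V) ∨
    A = Sum.inl '' (S : Set V) ∪ {Sum.inr (S, Sum.inr X)}}

/-- The Burling construction, `0`-indexed: `burlingAux n` bundles the vertex type,
the graph, and the distinguished family of stable sets of the Burling graph `G_{n+1}`.
`G_1` is a single vertex whose family consists of the single-vertex set. -/
def burlingAux : ℕ → (V : Type) × SimpleGraph V × Set (Set V)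
  | 0 => ⟨Unit, ⊥, {Set.univ}⟩
  | n + 1 =>
    ⟨BurlingVertexStep (burlingAux n).1 (burlingAux n).2.2,
     SimpleGraph.fromRel (BurlingRel (burlingAux n).2.1 (burlingAux n).2.2),
     BurlingFam (burlingAux n).2.2⟩

/-- The vertex type of the Burling graph `G_k` (for `k ≥ 1`). -/
def BurlingVertex (k : ℕ) : Type := (burlingAux (k - 1)).1

/-- The Burling graph `G_k` (for `k ≥ 1`). -/
def BurlingGraph (k : ℕ) : SimpleGraph (BurlingVertex k) := (burlingAux (k - 1)).2.1

/-- The distinguished family `𝒮(G_k)` of vertex subsets of the Burling graph `G_k`. -/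
def BurlingFamily (k : ℕ) : Set (Set (BurlingVertex k)) := (burlingAux (k - 1)).2.2

/-- A tree-decomposition of a graph `G`: a tree `T` (on an index type `ι`) together with
bags `bag t ⊆ V(G)` such that both endpoints of every edge of `G` lie in a common bag and,
for every vertex `v`, the set of indices whose bag contains `v` induces a nonempty
connected subgraph (i.e. a subtree) of `T`. -/
structure TreeDecomposition (V : Type) (G : SimpleGraph V) where
  ι : Type
  T : SimpleGraph ι
  isTree : T.IsTree
  bag : ι → Set V
  edge_mem : ∀ ⦃u v : V⦄, G.Adj u v → ∃ t, u ∈ bag t ∧ v ∈ bag t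
  support_connected : ∀ v : V, (SimpleGraph.induce {t | v ∈ bag t} T).Connected

/-- A path-decomposition of a graph `G`: bags indexed by a linearly ordered type
(the vertices of the path, in order) such that both endpoints of every edge of `G` lie in
a common bag and, for every vertex `v`, the set of indices whose bag contains `v` is a
nonempty interval (i.e. a nonempty subpath). -/
structure PathDecomposition (V : Type) (G : SimpleGraph V) where
  ι : Type
  [linOrd : LinearOrder ι]
  bag : ι → Set V
  edge_mem : ∀ ⦃u v : V⦄, G.Adj u v → ∃ p, u ∈ bag p ∧ v ∈ bag p
  support_nonempty : ∀ v : V, ∃ p, v ∈ bag p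
  support_interval : ∀ v : V, {p | v ∈ bag p}.OrdConnected

/-- The inductive step: if all sets in `F` are stable in `G`, the sets in `BurlingFam F` contain no
related pair. This is about the relation before symmetrization; since it covers both orders of a
pair, it also gives stability in the symmetrized graph. -/
theorem not_burlingRel_of_mem {V : Type} {G : SimpleGraph V} {F : Set (Set V)}
    (hF : ∀ S ∈ F, ∀ u ∈ S, ∀ v ∈ S, ¬ G.Adj u v) {A : Set (BurlingVertexStep V F)}
    (hA : A ∈ BurlingFam F) {u v : BurlingVertexStep V F} (hu : u ∈ A) (hv : v ∈ A) :
    ¬ BurlingRel G F u v := by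
  obtain ⟨S, X, rfl | rfl⟩ := hA
  · rcases hu with ⟨a, ha, rfl⟩ | ⟨a, ha, rfl⟩ <;> rcases hv with ⟨b, hb, rfl⟩ | ⟨b, hb, rfl⟩
    · exact hF S S.2 a ha b hb
    · exact id
    · exact id
    · exact fun h => hF X X.2 a ha b hb h.2
  · rcases hu with ⟨a, ha, rfl⟩ | rfl <;> rcases hv with ⟨b, hb, rfl⟩ | rfl
    · exact hF S S.2 a ha b hb
    · exact id
    · exact id
    · exact id

theorem burlingAux_family_stable (n : ℕ) :
    ∀ S ∈ (burlingAux n).2.2, ∀ u ∈ S, ∀ v ∈ S, ¬ (burlingAux n).2.1.Adj u v := by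
  induction n with
  | zero => exact fun _ _ _ _ _ _ h => h
  | succ n ih =>
    intro A hA u hu v hv h
    rcases h.2 with h | h
    · exact not_burlingRel_of_mem ih hA hu hv h
    · exact not_burlingRel_of_mem ih hA hv hu h

/-- For every `k ≥ 1`, every set `S` in the distinguished family
`𝒮(G_k)` of the Burling graph `G_k` is a stable (independent) set of `G_k`. -/
theorem burling_family_sets_are_stable :
    ∀ k : ℕ, 1 ≤ k → ∀ S ∈ BurlingFamily k,
      ∀ u ∈ S, ∀ v ∈ S, ¬ (BurlingGraph k).Adj u v := by
  exact fun k _ => burlingAux_family_stable (k - 1)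
end

section
/- For every k ≥ 1, the Burling graph G_k is triangle-free, i.e., G_k contains no three pairwise adjacent vertices. -/
theorem burlingStep_stable {V : Type} {G : SimpleGraph V} {F : Set (Set V)}
    (hF : ∀ S ∈ F, ∀ u ∈ S, ∀ v ∈ S, ¬ G.Adj u v) :
    ∀ A ∈ BurlingFam F, ∀ a ∈ A, ∀ b ∈ A,
      ¬ (SimpleGraph.fromRel (BurlingRel G F)).Adj a b := by
  rintro A ⟨⟨S, hS⟩, ⟨X, hX⟩, rfl | rfl⟩ a ha b hb ⟨-, hab⟩
  · rcases ha with ⟨u, hu, rfl⟩ | ⟨u, hu, rfl⟩ <;> rcases hb with ⟨v, hv, rfl⟩ | ⟨v, hv, rfl⟩ <;>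
      simp only [BurlingRel, or_self, true_and] at hab
    · exact hab.elim (hF S hS u hu v hv) (hF S hS v hv u hu)
    · exact hab.elim (hF X hX u hu v hv) (hF X hX v hv u hu)
  · rcases ha with ⟨u, hu, rfl⟩ | rfl <;> rcases hb with ⟨v, hv, rfl⟩ | rfl <;>
      simp only [BurlingRel, or_self] at hab
    exact hab.elim (hF S hS u hu v hv) (hF S hS v hv u hu)

theorem burlingStep_triangleFree {V : Type} {G : SimpleGraph V} {F : Set (Set V)}
    (hG : ∀ u v w, G.Adj u v → G.Adj u w → G.Adj v w → False)
    (hF : ∀ S ∈ F, ∀ u ∈ S, ∀ v ∈ S, ¬ G.Adj u v) (a b c : BurlingVertexStep V F)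
    (hab : (SimpleGraph.fromRel (BurlingRel G F)).Adj a b)
    (hac : (SimpleGraph.fromRel (BurlingRel G F)).Adj a c)
    (hbc : (SimpleGraph.fromRel (BurlingRel G F)).Adj b c) : False := by
  obtain ⟨-, hab⟩ := hab
  obtain ⟨-, hac⟩ := hac
  obtain ⟨-, hbc⟩ := hbc
  have hs := fun u v => G.adj_comm u v
  rcases a with a | ⟨S, a | ⟨X, hX⟩⟩ <;> rcases b with b | ⟨T, b | ⟨Y, hY⟩⟩ <;>
    rcases c with c | ⟨U, c | ⟨Z, hZ⟩⟩ <;>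
    simp only [BurlingRel, or_self, or_false, false_or] at hab hac hbc <;>
    grind

/-- For every `k ≥ 1`, the Burling graph `G_k` is triangle-free:
it contains no three pairwise adjacent vertices. -/
theorem burling_triangle_free :
    ∀ k : ℕ, 1 ≤ k → (BurlingGraph k).CliqueFree 3 := by
  have key : ∀ n : ℕ,
      (∀ u v w, (burlingAux n).2.1.Adj u v → (burlingAux n).2.1.Adj u w →
        (burlingAux n).2.1.Adj v w → False) ∧
      (∀ S ∈ (burlingAux n).2.2, ∀ u ∈ S, ∀ v ∈ S, ¬ (burlingAux n).2.1.Adj u v) := by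
    intro n
    induction n with
    | zero => exact ⟨fun _ _ _ h => h.elim, fun _ _ _ _ _ _ h => h.elim⟩
    | succ n ih => exact ⟨burlingStep_triangleFree ih.1 ih.2, burlingStep_stable ih.2⟩
  classical
  intro k _ s hs
  obtain ⟨a, b, c, hab, hac, hbc, -⟩ := SimpleGraph.is3Clique_iff.1 hs
  exact (key (k - 1)).1 a b c hab hac hbc
end

section
/- For every k ≥ 1 and every proper coloring φ of the Burling graph G_k, there exists a set S ∈ 𝒮(G_k) such that φ uses at least k distinct colors on the vertices of S. -/
/-- Inductive step for an arbitrary graph `G` with a family `F` of vertex subsets. -/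
lemma burling_step {V : Type} (G : SimpleGraph V) (F : Set (Set V)) (n : ℕ∞) {α : Type}
    (ih : ∀ φ : G.Coloring α, ∃ S ∈ F, n ≤ (⇑φ '' S).encard)
    (φ : (SimpleGraph.fromRel (BurlingRel G F)).Coloring α) :
    ∃ S ∈ BurlingFam F, n + 1 ≤ (⇑φ '' S).encard := by
  obtain ⟨S, hS, hA⟩ := ih (SimpleGraph.Coloring.mk (fun v => φ (Sum.inl v)) (by
    intro u v h
    apply φ.valid
    rw [SimpleGraph.fromRel_adj]
    exact ⟨by simpa using h.ne, Or.inl h⟩))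
  obtain ⟨X, hX, hB⟩ := ih (SimpleGraph.Coloring.mk
    (fun v => φ (Sum.inr (⟨S, hS⟩, Sum.inl v))) (by
      intro u v h
      apply φ.valid
      rw [SimpleGraph.fromRel_adj]
      exact ⟨by simpa using h.ne, Or.inl ⟨rfl, h⟩⟩))
  replace hA : n ≤ ((fun v => φ (Sum.inl v)) '' S).encard := hA
  replace hB : n ≤ ((fun v => φ (Sum.inr (⟨S, hS⟩, Sum.inl v))) '' X).encard := hB
  have hc : φ (Sum.inr (⟨S, hS⟩, Sum.inr ⟨X, hX⟩)) ∉
      (fun v => φ (Sum.inr (⟨S, hS⟩, Sum.inl v))) '' X := by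
    rintro ⟨v, hv, h⟩
    refine φ.valid ?_ h.symm
    rw [SimpleGraph.fromRel_adj]
    exact ⟨by simp, Or.inl ⟨rfl, hv⟩⟩
  have grow : ∀ (D E : Set α) (d : α), n ≤ D.encard → d ∉ D → insert d D ⊆ E →
      n + 1 ≤ E.encard := by
    intro D E d hD hd hE
    refine le_trans ?_ (Set.encard_le_encard hE)
    rw [Set.encard_insert_of_notMem hd]
    gcongr
  by_cases hcA : φ (Sum.inr (⟨S, hS⟩, Sum.inr ⟨X, hX⟩)) ∈ (fun v => φ (Sum.inl v)) '' S
  · refine ⟨_, ⟨⟨S, hS⟩, ⟨X, hX⟩, Or.inl rfl⟩, ?_⟩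
    rw [Set.image_union, Set.image_image, Set.image_image]
    by_cases hBA : (fun v => φ (Sum.inr (⟨S, hS⟩, Sum.inl v))) '' X ⊆
        (fun v => φ (Sum.inl v)) '' S
    · exact grow _ _ _ hB hc
        (Set.insert_subset (Or.inl hcA) Set.subset_union_right)
    · obtain ⟨b, hbB, hbA⟩ := Set.not_subset.1 hBA
      exact grow _ _ b hA hbA
        (Set.insert_subset (Or.inr hbB) Set.subset_union_left)
  · refine ⟨_, ⟨⟨S, hS⟩, ⟨X, hX⟩, Or.inr rfl⟩, grow _ _ _ hA hcA ?_⟩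
    rw [Set.image_union, Set.image_image, Set.image_singleton]
    exact Set.insert_subset (Or.inr rfl) Set.subset_union_left

lemma burlingAux_many_colors (n : ℕ) (α : Type) (φ : (burlingAux n).2.1.Coloring α) :
    ∃ S ∈ (burlingAux n).2.2, ((n + 1 : ℕ) : ℕ∞) ≤ (⇑φ '' S).encard := by
  induction n with
  | zero =>
    refine ⟨Set.univ, rfl, ?_⟩
    simp only [zero_add, Nat.cast_one, Set.one_le_encard_iff_nonempty]
    exact ⟨_, (), trivial, rfl⟩
  | succ n ih =>
    have := burling_step _ _ ((n + 1 : ℕ) : ℕ∞) ih φ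
    rw [Nat.cast_succ]
    exact this

/-- For every `k ≥ 1` and every proper coloring `φ` of the Burling graph
`G_k`, there is a set `S ∈ 𝒮(G_k)` on whose vertices `φ` uses at least `k` distinct
colors. -/
theorem burling_coloring_many_colors_on_a_family_set :
    ∀ k : ℕ, 1 ≤ k → ∀ (α : Type) (φ : (BurlingGraph k).Coloring α),
      ∃ S ∈ BurlingFamily k, (k : ℕ∞) ≤ (⇑φ '' S).encard := by
  intro k hk α φ
  obtain ⟨n, rfl⟩ := Nat.exists_eq_add_of_le' hk
  exact burlingAux_many_colors n α φ
end

section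
/- For every k ≥ 1, the Burling graph G_k has chromatic number at least k. -/
/-- Every proper coloring of `G` by a finite set of colors uses at least `k` colors on some member
of the family `F`. -/
def BurlingManyColors {V : Type} (G : SimpleGraph V) (F : Set (Set V)) (k : ℕ) : Prop :=
  ∀ (m : ℕ) (C : G.Coloring (Fin m)), ∃ S ∈ F, k ≤ (C '' S).ncard

theorem BurlingManyColors.step {V : Type} {G : SimpleGraph V} {F : Set (Set V)} {k : ℕ}
    (h : BurlingManyColors G F k) :
    BurlingManyColors (SimpleGraph.fromRel (BurlingRel G F)) (BurlingFam F) (k + 1) := by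
  intro m C
  let C₀ : G.Coloring (Fin m) := SimpleGraph.Coloring.mk (fun v => C (Sum.inl v)) (by
    intro u v huv
    apply C.valid
    rw [SimpleGraph.fromRel_adj]
    exact ⟨fun e => huv.ne (Sum.inl.inj e), Or.inl huv⟩)
  obtain ⟨S, hS, hkS⟩ := h m C₀
  let C₁ : G.Coloring (Fin m) :=
    SimpleGraph.Coloring.mk (fun v => C (Sum.inr (⟨S, hS⟩, Sum.inl v))) (by
      intro u v huv
      apply C.valid
      rw [SimpleGraph.fromRel_adj]
      exact ⟨fun e => huv.ne (by simpa using e), Or.inl ⟨rfl, huv⟩⟩)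
  obtain ⟨X, hX, hkX⟩ := h m C₁
  set c := C (Sum.inr (⟨S, hS⟩, Sum.inr ⟨X, hX⟩)) with hc
  have hcX : c ∉ C₁ '' X := by
    rintro ⟨x, hx, e⟩
    refine C.valid (v := Sum.inr (⟨S, hS⟩, Sum.inr ⟨X, hX⟩))
      (w := Sum.inr (⟨S, hS⟩, Sum.inl x)) ?_ e.symm
    rw [SimpleGraph.fromRel_adj]
    exact ⟨by simp, Or.inl ⟨rfl, hx⟩⟩
  by_cases hcS : c ∈ C₀ '' S
  · refine ⟨_, ⟨⟨S, hS⟩, ⟨X, hX⟩, Or.inl rfl⟩, ?_⟩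
    calc k + 1 ≤ (C₁ '' X).ncard + 1 := by omega
      _ = (insert c (C₁ '' X)).ncard := (Set.ncard_insert_of_notMem hcX (Set.toFinite _)).symm
      _ ≤ _ := by
        refine Set.ncard_le_ncard ?_ (Set.toFinite _)
        rintro _ (rfl | ⟨x, hx, rfl⟩)
        · obtain ⟨s, hs, e⟩ := hcS
          exact ⟨Sum.inl s, Or.inl ⟨s, hs, rfl⟩, e⟩
        · exact ⟨_, Or.inr ⟨x, hx, rfl⟩, rfl⟩
  · refine ⟨_, ⟨⟨S, hS⟩, ⟨X, hX⟩, Or.inr rfl⟩, ?_⟩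
    calc k + 1 ≤ (C₀ '' S).ncard + 1 := by omega
      _ = (insert c (C₀ '' S)).ncard := (Set.ncard_insert_of_notMem hcS (Set.toFinite _)).symm
      _ ≤ _ := by
        refine Set.ncard_le_ncard ?_ (Set.toFinite _)
        rintro _ (rfl | ⟨s, hs, rfl⟩)
        · exact ⟨_, Or.inr rfl, rfl⟩
        · exact ⟨Sum.inl s, Or.inl ⟨s, hs, rfl⟩, rfl⟩

theorem burlingAux_manyColors (n : ℕ) :
    BurlingManyColors (burlingAux n).2.1 (burlingAux n).2.2 (n + 1) := by
  induction n with
  | zero =>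
    intro m C
    refine ⟨Set.univ, rfl, ?_⟩
    have hne : (C '' Set.univ).Nonempty := ⟨_, (), trivial, rfl⟩
    exact (Set.ncard_pos (Set.toFinite _)).2 hne
  | succ n ih => exact ih.step

/-- For every `k ≥ 1`, the Burling graph `G_k` has chromatic number
at least `k`. -/
theorem burling_chromaticNumber_ge :
    ∀ k : ℕ, 1 ≤ k → (k : ℕ∞) ≤ (BurlingGraph k).chromaticNumber := by
  intro k hk
  refine le_iInf₂ fun m hm => ?_
  obtain ⟨C⟩ := hm
  obtain ⟨S, -, hS⟩ := burlingAux_manyColors (k - 1) m C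
  have hle : (C '' S).ncard ≤ m := by
    simpa using Set.ncard_le_ncard (Set.subset_univ (C '' S)) (Set.toFinite _)
  have hkm : k ≤ m := by
    have := hS.trans hle
    omega
  exact_mod_cast hkm
end

section
/- For every k ≥ 1, the Burling graph G_k admits a tree-decomposition (T, {B_t}_{t ∈ V(T)}) and a path-decomposition (P, {B_p}_{p ∈ V(P)}) such that |B_t ∩ B_p| ≤ 2 for every t ∈ V(T) and every p ∈ V(P). -/
/-! ### Rooted trees given by parent functions -/

/-- The graph joining every node to its parent. -/
def parentGraph {ι : Type} (parent : ι → Option ι) : SimpleGraph ι :=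
  SimpleGraph.fromRel fun a b => parent a = some b

/-- `A` is a subtree with topmost node `a`: every other node of `A` has its parent in `A`. -/
def IsSubtree {ι : Type} (parent : ι → Option ι) (A : Set ι) (a : ι) : Prop :=
  a ∈ A ∧ ∀ x ∈ A, x = a ∨ ∃ y ∈ A, parent x = some y

lemma IsSubtree.connected {ι : Type} {parent : ι → Option ι} {depth : ι → ℕ}
    (hd : ∀ x y, parent x = some y → depth y < depth x) {A : Set ι} {a : ι}
    (h : IsSubtree parent A a) : ((parentGraph parent).induce A).Connected := by
  have key : ∀ n : ℕ, ∀ x : A, depth x = n →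
      ((parentGraph parent).induce A).Reachable x ⟨a, h.1⟩ := by
    intro n
    induction n using Nat.strong_induction_on with
    | _ n ih =>
      rintro ⟨x, hx⟩ hn
      rcases h.2 x hx with rfl | ⟨y, hy, hxy⟩
      · exact SimpleGraph.Reachable.refl _
      · have hlt := hd x y hxy
        refine SimpleGraph.Reachable.trans (SimpleGraph.Adj.reachable ?_)
          (ih (depth y) (hn ▸ hlt) ⟨y, hy⟩ rfl)
        simp only [SimpleGraph.comap_adj, parentGraph, SimpleGraph.fromRel_adj]
        refine ⟨?_, Or.inl hxy⟩
        rintro rfl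
        exact lt_irrefl _ hlt
  have : Nonempty A := ⟨⟨a, h.1⟩⟩
  exact ⟨fun x y => (key _ x rfl).trans (key _ y rfl).symm⟩

/-- On a cycle, both neighbours of a deepest node would be its parent. -/
lemma parentGraph_isAcyclic {ι : Type} {parent : ι → Option ι} {depth : ι → ℕ}
    (hd : ∀ x y, parent x = some y → depth y < depth x) : (parentGraph parent).IsAcyclic := by
  classical
  intro v c hc
  obtain ⟨x, hx, hmax⟩ := c.support.toFinset.exists_max_image depth ⟨v, by simp⟩
  have hx' : x ∈ c.support := by simpa using hx
  have hc' := hc.rotate hx'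
  have hpar : ∀ y ∈ (c.rotate x hx').support, (parentGraph parent).Adj x y → parent x = some y := by
    intro y hy hadj
    rw [parentGraph, SimpleGraph.fromRel_adj] at hadj
    rcases hadj.2 with h | h
    · exact h
    · have h1 := hd _ _ h
      have h2 := hmax y (by simpa using hy)
      omega
  have h1 := hpar _ ((c.rotate x hx').getVert_mem_support 1)
    ((c.rotate x hx').adj_snd hc'.not_nil)
  have h2 := hpar _ ((c.rotate x hx').getVert_mem_support _)
    ((c.rotate x hx').adj_penultimate hc'.not_nil).symm
  exact hc'.snd_ne_penultimate (Option.some.inj (h1.symm.trans h2))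

lemma parentGraph_isTree {ι : Type} {parent : ι → Option ι} {depth : ι → ℕ}
    (hd : ∀ x y, parent x = some y → depth y < depth x) {r : ι}
    (hr : ∀ x, parent x = none → x = r) : (parentGraph parent).IsTree := by
  have hu : IsSubtree parent Set.univ r := by
    refine ⟨trivial, fun x _ => ?_⟩
    cases h : parent x with
    | none => exact Or.inl (hr x h)
    | some y => exact Or.inr ⟨y, trivial, rfl⟩
  refine ⟨?_, parentGraph_isAcyclic hd⟩
  exact (SimpleGraph.induceUnivIso (parentGraph parent)).connected_iff.1 (hu.connected hd)

/-! ### The inductive invariant -/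

/-- An orthogonal pair of decompositions of `G` whose path has the points of `P`, where the family
`f : P → Set V` plays the role of the distinguished sets. The tree is rooted and encoded by its
parent function; `B t v` and `C p v` say that `v` lies in the tree bag of `t` and in the path bag of
`p`. -/
structure OrthData {V : Type} (G : SimpleGraph V) (P : Type) [LinearOrder P] (f : P → Set V) where
  ι : Type
  parent : ι → Option ι
  depth : ι → ℕ
  root : ι
  B : ι → V → Prop
  C : P → V → Prop
  /-- The subtree reserved for the distinguished set `f p`. -/
  R : P → Set ι
  depth_lt : ∀ x y, parent x = some y → depth y < depth x
  parent_eq_none : ∀ x, parent x = none ↔ x = root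
  nonempty : Nonempty P
  B_subtree : ∀ v, ∃ a, IsSubtree parent {t | B t v} a
  B_edge : ∀ u v, G.Adj u v → ∃ t, B t u ∧ B t v
  C_nonempty : ∀ v, ∃ p, C p v
  C_ordConnected : ∀ v, {p | C p v}.OrdConnected
  C_edge : ∀ u v, G.Adj u v → ∃ p, C p u ∧ C p v
  C_of_mem : ∀ p, ∀ v ∈ f p, C p v
  R_subtree : ∀ p, IsSubtree parent (R p) root
  R_meets : ∀ p, ∀ v ∈ f p, ∃ t ∈ R p, B t v
  /-- On the reserved subtree of `f p`, tree bags meet the path bag of `p` in at most one vertex. -/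
  R_unique : ∀ p, ∀ t ∈ R p, ∀ u v, B t u → C p u → B t v → C p v → u = v
  /-- A tree bag and a path bag share no three distinct vertices. -/
  le_two : ∀ t p u v w, B t u → C p u → B t v → C p v → B t w → C p w → u = v ∨ u = w ∨ v = w

/-- The invariant for the one-vertex graph. -/
def OrthData.base (f : Unit → Set Unit) : OrthData (⊥ : SimpleGraph Unit) Unit f where
  ι := Unit
  parent := fun _ => none
  depth := fun _ => 0
  root := ()
  B := fun _ _ => True
  C := fun _ _ => True
  R := fun _ => Set.univ
  depth_lt := by simp
  parent_eq_none := by simp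
  nonempty := ⟨()⟩
  B_subtree := fun _ => ⟨(), by simp [IsSubtree]⟩
  B_edge := by simp
  C_nonempty := by simp
  C_ordConnected := by simp [Set.ordConnected_univ]
  C_edge := by simp
  C_of_mem := by simp
  R_subtree := by simp [IsSubtree]
  R_meets := by simp
  R_unique := by simp
  le_two := by simp

/-! ### The inductive step -/

section Step

variable {V : Type} {G : SimpleGraph V} {F : Set (Set V)} {P : Type}

/-- The points of the new path, when the points of the old one are identified with the distinguished
sets of `H`: `(S, X, false)` stands for `S ∪ X` and `(S, X, true)` for `S ∪ {v_{S,X}}`. -/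
abbrev StepPath (P : Type) : Type := P ×ₗ (P ×ₗ Bool)

/-- The distinguished set belonging to a point of the new path. -/
def stepSet (e : P ≃ ↥F) (p : StepPath P) : Set (BurlingVertexStep V F) :=
  {w | match w with
    | Sum.inl u => u ∈ (e p.1 : Set V)
    | Sum.inr (S, Sum.inl u) => S = e p.1 ∧ p.2.2 = false ∧ u ∈ (e p.2.1 : Set V)
    | Sum.inr (S, Sum.inr X) => S = e p.1 ∧ p.2.2 = true ∧ X = e p.2.1}

lemma stepSet_injective (e : P ≃ ↥F) : Function.Injective (stepSet e) := by
  rintro ⟨s, x, b⟩ ⟨s', x', b'⟩ h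
  have h1 : ∀ w, w ∈ stepSet e (s, x, b) ↔ w ∈ stepSet e (s', x', b') := by
    intro w; rw [h]
  have hs : s = s' := e.injective (Subtype.ext (Set.ext fun u => h1 (Sum.inl u)))
  subst hs
  have hl := fun u => h1 (Sum.inr (e s, Sum.inl u))
  have hr := fun Y => h1 (Sum.inr (e s, Sum.inr Y))
  simp only [stepSet, Set.mem_ofPred_eq, true_and] at hl hr
  have hx : b = b' ∧ x = x' := by
    cases b <;> cases b' <;> simp at hl hr ⊢
    · exact e.injective (Subtype.ext (Set.ext hl))
    · exact hr
  rw [hx.1, hx.2]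

lemma range_stepSet (e : P ≃ ↥F) : Set.range (stepSet e) = BurlingFam F := by
  have h0 : ∀ s x : P, stepSet e (s, x, false) = Sum.inl '' (e s : Set V) ∪
      (fun v => Sum.inr (e s, Sum.inl v)) '' (e x : Set V) := by
    intro s x
    ext w
    rcases w with u | ⟨T, u | Y⟩ <;> simp [stepSet]
    grind
  have h1 : ∀ s x : P, stepSet e (s, x, true) = Sum.inl '' (e s : Set V) ∪
      {Sum.inr (e s, Sum.inr (e x))} := by
    intro s x
    ext w
    rcases w with u | ⟨T, u | Y⟩ <;> simp [stepSet]
  ext A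
  constructor
  · rintro ⟨⟨s, x, b⟩, rfl⟩
    cases b
    · exact ⟨e s, e x, Or.inl (h0 s x)⟩
    · exact ⟨e s, e x, Or.inr (h1 s x)⟩
  · rintro ⟨S, X, h⟩
    obtain ⟨s, rfl⟩ := e.surjective S
    obtain ⟨x, rfl⟩ := e.surjective X
    rcases h with rfl | rfl
    · exact ⟨(s, x, false), h0 s x⟩
    · exact ⟨(s, x, true), h1 s x⟩

/-- Every relation that is symmetric and holds along `BurlingRel` holds along the new edges. -/
lemma step_edge {r : BurlingVertexStep V F → BurlingVertexStep V F → Prop}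
    (hsymm : ∀ u v, r u v → r v u) (h : ∀ u v, BurlingRel G F u v → r u v) {u v}
    (huv : (SimpleGraph.fromRel (BurlingRel G F)).Adj u v) : r u v := by
  rcases ((SimpleGraph.fromRel_adj _ _ _).1 huv).2 with h' | h'
  · exact h _ _ h'
  · exact hsymm _ _ (h _ _ h')

variable [LinearOrder P] {e : P ≃ ↥F}

namespace OrthData

variable (D : OrthData G P fun p => (e p : Set V))

/-- The nodes of the new tree: the nodes of the tree of `H` and, for each `S`, the node `r_S`
(encoded by `none`) and the nodes of the tree of `H_S`. -/
abbrev StepNode : Type := D.ι ⊕ (↥F × Option D.ι)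

/-- The node `r_S` hangs below the root of the tree of `H`, and the tree of `H_S` below `r_S`. -/
def stepParent : D.StepNode → Option D.StepNode
  | Sum.inl t => (D.parent t).map Sum.inl
  | Sum.inr (_, none) => some (Sum.inl D.root)
  | Sum.inr (S, some t) => some (Sum.inr (S, D.parent t))

/-- Depths below the root of `H` are measured from `D.depth D.root`, which need not be zero. -/
def stepDepth : D.StepNode → ℕ
  | Sum.inl t => D.depth t
  | Sum.inr (_, none) => D.depth D.root + 1
  | Sum.inr (_, some t) => D.depth D.root + 2 + D.depth t

/-- The new tree bags: `v_{S,X}` occupies `r_S` and the reserved subtree of `X` in the tree of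
`H_S`. -/
def stepB : D.StepNode → BurlingVertexStep V F → Prop
  | Sum.inl t, Sum.inl u => D.B t u
  | Sum.inr (S, some t), Sum.inr (S', Sum.inl u) => S = S' ∧ D.B t u
  | Sum.inr (S, none), Sum.inr (S', Sum.inr _) => S = S'
  | Sum.inr (S, some t), Sum.inr (S', Sum.inr X) => S = S' ∧ t ∈ D.R (e.symm X)
  | _, _ => False

/-- The new path bags: the old vertices of `H` and of `H_S` keep their bags, and `v_{S,X}` occupies
the single point `(S, X, true)`. -/
def stepC (p : StepPath P) : BurlingVertexStep V F → Prop
  | Sum.inl u => D.C p.1 u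
  | Sum.inr (S, Sum.inl u) => S = e p.1 ∧ D.C p.2.1 u
  | Sum.inr (S, Sum.inr X) => S = e p.1 ∧ X = e p.2.1 ∧ p.2.2 = true

/-- The new reserved subtrees: `R S ∪ {r_S} ∪ R X` for `S ∪ X`, and `R S ∪ {r_S}` for
`S ∪ {v_{S,X}}`. -/
def stepR (p : StepPath P) : Set D.StepNode :=
  {t | match t with
    | Sum.inl t => t ∈ D.R p.1
    | Sum.inr (S, none) => S = e p.1
    | Sum.inr (S, some t) => S = e p.1 ∧ p.2.2 = false ∧ t ∈ D.R p.2.1}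

lemma step_B_subtree (w : BurlingVertexStep V F) :
    ∃ a, IsSubtree D.stepParent {t | D.stepB t w} a := by
  rcases w with u | ⟨S, u | X⟩
  · obtain ⟨a, ha, h⟩ := D.B_subtree u
    refine ⟨Sum.inl a, ha, ?_⟩
    rintro (t | ⟨S, _ | t⟩) ht
    · rcases h t ht with rfl | ⟨y, hy, hty⟩
      · exact Or.inl rfl
      · exact Or.inr ⟨Sum.inl y, hy, by simp [stepParent, hty]⟩
    · exact ht.elim
    · exact ht.elim
  · obtain ⟨a, ha, h⟩ := D.B_subtree u
    refine ⟨Sum.inr (S, some a), ⟨rfl, ha⟩, ?_⟩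
    rintro (t | ⟨S', _ | t⟩) ht
    · exact ht.elim
    · exact ht.elim
    · obtain ⟨rfl, ht⟩ := ht
      rcases h t ht with rfl | ⟨y, hy, hty⟩
      · exact Or.inl rfl
      · exact Or.inr ⟨Sum.inr (S', some y), ⟨rfl, hy⟩, by simp [stepParent, hty]⟩
  · obtain ⟨ha, h⟩ := D.R_subtree (e.symm X)
    refine ⟨Sum.inr (S, none), rfl, ?_⟩
    rintro (t | ⟨S', _ | t⟩) ht
    · exact ht.elim
    · obtain rfl : S' = S := ht
      exact Or.inl rfl
    · obtain ⟨rfl, ht⟩ := ht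
      rcases h t ht with rfl | ⟨y, hy, hty⟩
      · refine Or.inr ⟨Sum.inr (S', none), rfl, ?_⟩
        simp [stepParent, (D.parent_eq_none D.root).2 rfl]
      · exact Or.inr ⟨Sum.inr (S', some y), ⟨rfl, hy⟩, by simp [stepParent, hty]⟩

lemma step_R_subtree (p : StepPath P) :
    IsSubtree D.stepParent (D.stepR p) (Sum.inl D.root) := by
  refine ⟨(D.R_subtree p.1).1, ?_⟩
  rintro (t | ⟨S, _ | t⟩) ht
  · rcases (D.R_subtree p.1).2 t ht with rfl | ⟨y, hy, hty⟩
    · exact Or.inl rfl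
    · exact Or.inr ⟨Sum.inl y, hy, by simp [stepParent, hty]⟩
  · exact Or.inr ⟨Sum.inl D.root, (D.R_subtree p.1).1, rfl⟩
  · obtain ⟨hS, hb, ht⟩ := ht
    rcases (D.R_subtree p.2.1).2 t ht with rfl | ⟨y, hy, hty⟩
    · refine Or.inr ⟨Sum.inr (S, none), hS, ?_⟩
      simp [stepParent, (D.parent_eq_none D.root).2 rfl]
    · exact Or.inr ⟨Sum.inr (S, some y), ⟨hS, hb, hy⟩, by simp [stepParent, hty]⟩

lemma step_C_ordConnected (w : BurlingVertexStep V F) : {p | D.stepC p w}.OrdConnected := by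
  refine ⟨?_⟩
  rintro ⟨s₁, x₁, b₁⟩ h₁ ⟨s₂, x₂, b₂⟩ h₂ ⟨s, x, b⟩ ⟨h₁₂, h₂₃⟩
  have hs₁ : s₁ ≤ s := Prod.Lex.monotone_fst _ _ h₁₂
  have hs₂ : s ≤ s₂ := Prod.Lex.monotone_fst _ _ h₂₃
  -- once the first coordinates agree, the remaining coordinates are again ordered
  have le_snd : ∀ {s : P} {y z : P ×ₗ Bool},
      (show StepPath P from (s, y)) ≤ (show StepPath P from (s, z)) → y ≤ z := by
    intro s y z h
    rcases Prod.Lex.le_iff.1 h with h | h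
    · exact (lt_irrefl _ h).elim
    · exact h.2
  rcases w with u | ⟨T, u | Y⟩
  · exact (D.C_ordConnected u).out h₁ h₂ ⟨hs₁, hs₂⟩
  · obtain ⟨e₁, h₁⟩ := h₁
    obtain ⟨e₂, h₂⟩ := h₂
    obtain rfl : s₁ = s₂ := e.injective (e₁.symm.trans e₂)
    obtain rfl := le_antisymm hs₁ hs₂
    exact ⟨e₁, (D.C_ordConnected u).out h₁ h₂
      ⟨Prod.Lex.monotone_fst _ _ (le_snd h₁₂), Prod.Lex.monotone_fst _ _ (le_snd h₂₃)⟩⟩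
  · have h₁' := h₁
    obtain ⟨e₁, e₁', e₁''⟩ := h₁
    obtain ⟨e₂, e₂', e₂''⟩ := h₂
    obtain rfl : s₁ = s₂ := e.injective (e₁.symm.trans e₂)
    obtain rfl : x₁ = x₂ := e.injective (e₁'.symm.trans e₂')
    obtain rfl : b₁ = b₂ := e₁''.trans e₂''.symm
    exact Eq.subst (motive := fun p => D.stepC p (Sum.inr (T, Sum.inr Y)))
      (le_antisymm h₁₂ h₂₃) h₁'

lemma step_B_edge {u v : BurlingVertexStep V F}
    (huv : (SimpleGraph.fromRel (BurlingRel G F)).Adj u v) : ∃ t, D.stepB t u ∧ D.stepB t v := by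
  refine step_edge (r := fun u v => ∃ t, D.stepB t u ∧ D.stepB t v)
    (fun u v ⟨t, h⟩ => ⟨t, h.symm⟩) ?_ huv
  rintro (u | ⟨S, u | X⟩) (v | ⟨S', v | Y⟩) h <;> try exact h.elim
  · obtain ⟨t, h₁, h₂⟩ := D.B_edge u v h
    exact ⟨Sum.inl t, h₁, h₂⟩
  · obtain ⟨rfl, h⟩ := h
    obtain ⟨t, h₁, h₂⟩ := D.B_edge u v h
    exact ⟨Sum.inr (S, some t), ⟨rfl, h₁⟩, rfl, h₂⟩
  · obtain ⟨rfl, h⟩ := h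
    obtain ⟨t, h₁, h₂⟩ := D.R_meets (e.symm X) v (by simpa using h)
    exact ⟨Sum.inr (S, some t), ⟨rfl, h₁⟩, rfl, h₂⟩

lemma step_C_edge {u v : BurlingVertexStep V F}
    (huv : (SimpleGraph.fromRel (BurlingRel G F)).Adj u v) : ∃ p, D.stepC p u ∧ D.stepC p v := by
  refine step_edge (r := fun u v => ∃ p, D.stepC p u ∧ D.stepC p v)
    (fun u v ⟨t, h⟩ => ⟨t, h.symm⟩) ?_ huv
  rintro (u | ⟨S, u | X⟩) (v | ⟨S', v | Y⟩) h <;> try exact h.elim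
  · obtain ⟨p, h₁, h₂⟩ := D.C_edge u v h
    exact ⟨(p, p, true), h₁, h₂⟩
  · obtain ⟨rfl, h⟩ := h
    obtain ⟨p, h₁, h₂⟩ := D.C_edge u v h
    exact ⟨(e.symm S, p, true), ⟨by simp, h₁⟩, by simp, h₂⟩
  · obtain ⟨rfl, h⟩ := h
    exact ⟨(e.symm S, e.symm X, true), ⟨by simp, by simp, rfl⟩, by simp,
      D.C_of_mem (e.symm X) v (by simpa using h)⟩

lemma step_R_meets (p : StepPath P) (w : BurlingVertexStep V F) (hw : w ∈ stepSet e p) :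
    ∃ t ∈ D.stepR p, D.stepB t w := by
  rcases w with u | ⟨S, u | X⟩
  · obtain ⟨t, ht, h⟩ := D.R_meets p.1 u hw
    exact ⟨Sum.inl t, ht, h⟩
  · obtain ⟨hS, hb, hu⟩ := hw
    obtain ⟨t, ht, h⟩ := D.R_meets p.2.1 u hu
    exact ⟨Sum.inr (S, some t), ⟨hS, hb, ht⟩, rfl, h⟩
  · exact ⟨Sum.inr (S, none), hw.1, rfl⟩

lemma step_R_unique (p : StepPath P) (t : D.StepNode) (ht : t ∈ D.stepR p)
    (u v : BurlingVertexStep V F) (hu : D.stepB t u) (hu' : D.stepC p u)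
    (hv : D.stepB t v) (hv' : D.stepC p v) : u = v := by
  rcases t with t | ⟨S, _ | t⟩ <;> rcases u with u | ⟨S₁, u | X₁⟩ <;>
    rcases v with v | ⟨S₂, v | X₂⟩ <;> simp only [stepB, stepC, stepR, Set.mem_ofPred_eq] at *
  · rw [D.R_unique p.1 t ht u v hu hu' hv hv']
  · grind
  · rw [D.R_unique p.2.1 t ht.2.2 u v hu.2 hu'.2 hv.2 hv'.2, ← hu.1, ← hv.1]
  -- at a point `(S, X, false)` no new vertex is present
  all_goals simp_all

lemma step_le_two (t : D.StepNode) (p : StepPath P) (u v w : BurlingVertexStep V F)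
    (hu : D.stepB t u) (hu' : D.stepC p u) (hv : D.stepB t v) (hv' : D.stepC p v)
    (hw : D.stepB t w) (hw' : D.stepC p w) : u = v ∨ u = w ∨ v = w := by
  rcases t with t | ⟨S, _ | t⟩ <;> rcases u with u | ⟨S₁, u | X₁⟩ <;>
    rcases v with v | ⟨S₂, v | X₂⟩ <;> rcases w with w | ⟨S₃, w | X₃⟩ <;>
    simp only [stepB, stepC] at *
  · have := D.le_two t p.1 u v w hu hu' hv hv' hw hw'
    simpa using this
  · grind
  · have := D.le_two t p.2.1 u v w hu.2 hu'.2 hv.2 hv'.2 hw.2 hw'.2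
    simpa [← hu.1, ← hv.1, ← hw.1] using this
  -- if a new vertex is present, it is `v_{S,X}` with `t ∈ R X`, where old vertices are unique
  all_goals
    have hq := D.R_unique p.2.1 t
    grind

/-- The inductive step of the construction. -/
def step : OrthData (SimpleGraph.fromRel (BurlingRel G F)) (StepPath P) (stepSet e) where
  ι := D.StepNode
  parent := D.stepParent
  depth := D.stepDepth
  root := Sum.inl D.root
  B := D.stepB
  C := D.stepC
  R := D.stepR
  depth_lt := by
    rintro (t | ⟨S, _ | t⟩) y h
    · simp only [stepParent, Option.map_eq_some_iff] at h
      obtain ⟨s, hs, rfl⟩ := h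
      exact D.depth_lt t s hs
    · obtain rfl := Option.some.inj h
      exact Nat.lt_succ_self _
    · obtain rfl := Option.some.inj h
      cases hs : D.parent t with
      | none => simp only [stepDepth]; omega
      | some s =>
        have := D.depth_lt t s hs
        simp only [stepDepth]; omega
  parent_eq_none := by
    rintro (t | ⟨S, _ | t⟩) <;> simp [stepParent, D.parent_eq_none]
  nonempty := D.nonempty.map fun S => (S, S, true)
  B_subtree := D.step_B_subtree
  B_edge := fun _ _ => D.step_B_edge
  C_nonempty := by
    obtain ⟨S₀⟩ := D.nonempty
    rintro (u | ⟨S, u | X⟩)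
    · obtain ⟨p, hp⟩ := D.C_nonempty u
      exact ⟨(p, S₀, true), hp⟩
    · obtain ⟨p, hp⟩ := D.C_nonempty u
      exact ⟨(e.symm S, p, true), by simp, hp⟩
    · exact ⟨(e.symm S, e.symm X, true), by simp, by simp, rfl⟩
  C_ordConnected := D.step_C_ordConnected
  C_edge := fun _ _ => D.step_C_edge
  C_of_mem := by
    rintro p (u | ⟨S, u | X⟩) h
    · exact D.C_of_mem p.1 u h
    · exact ⟨h.1, D.C_of_mem p.2.1 u h.2.2⟩
    · exact ⟨h.1, h.2.2, h.2.1⟩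
  R_subtree := D.step_R_subtree
  R_meets := D.step_R_meets
  R_unique := D.step_R_unique
  le_two := D.step_le_two

end OrthData

end Step

/-- The points of the path correspond to the distinguished sets. -/
lemma exists_orthData (n : ℕ) : ∃ (P : Type) (_ : LinearOrder P) (e : P ≃ ↥(burlingAux n).2.2),
    Nonempty (OrthData (burlingAux n).2.1 P fun p => (e p : Set (burlingAux n).1)) := by
  induction n with
  | zero =>
    let e : Unit ≃ ↥({Set.univ} : Set (Set Unit)) := Equiv.ofUnique _ _
    exact ⟨Unit, inferInstance, e, ⟨OrthData.base fun p => e p⟩⟩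
  | succ n ih =>
    obtain ⟨P, _, e, ⟨D⟩⟩ := ih
    exact ⟨StepPath P, inferInstance,
      (Equiv.ofInjective _ (stepSet_injective e)).trans (Equiv.setCongr (range_stepSet e)),
      ⟨D.step⟩⟩

/-! ### The decompositions -/

/-- For every `k ≥ 1`, the Burling graph `G_k` has a tree-decomposition
`(T, {B_t})` and a path-decomposition `(P, {B_p})` such that `|B_t ∩ B_p| ≤ 2` for every
vertex `t` of `T` and every vertex `p` of `P`. -/
theorem burling_orthogonal_tree_and_path_decompositions :
    ∀ k : ℕ, 1 ≤ k →
      ∃ (td : TreeDecomposition (BurlingVertex k) (BurlingGraph k))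
        (pd : PathDecomposition (BurlingVertex k) (BurlingGraph k)),
        ∀ (t : td.ι) (p : pd.ι), (td.bag t ∩ pd.bag p).encard ≤ 2 := by
  intro k _
  obtain ⟨P, lo, _, ⟨D⟩⟩ := exists_orthData (k - 1)
  let td : TreeDecomposition (BurlingVertex k) (BurlingGraph k) :=
    { ι := D.ι
      T := parentGraph D.parent
      isTree := parentGraph_isTree D.depth_lt fun x => (D.parent_eq_none x).1
      bag := fun t => {v | D.B t v}
      edge_mem := fun u v h => D.B_edge u v h
      support_connected := fun v => (D.B_subtree v).choose_spec.connected D.depth_lt }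
  let pd : PathDecomposition (BurlingVertex k) (BurlingGraph k) :=
    { ι := P
      linOrd := lo
      bag := fun p => {v | D.C p v}
      edge_mem := fun u v h => D.C_edge u v h
      support_nonempty := D.C_nonempty
      support_interval := D.C_ordConnected }
  refine ⟨td, pd, fun t p => ?_⟩
  by_contra! hlt
  obtain ⟨s, hs, hs3⟩ := Set.exists_subset_encard_eq (Order.add_one_le_of_lt hlt)
  obtain ⟨x, y, z, hxy, hxz, hyz, rfl⟩ := Set.encard_eq_three.1 (hs3.trans (by norm_num))
  have hx : x ∈ td.bag t ∩ pd.bag p := hs (by simp)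
  have hy : y ∈ td.bag t ∩ pd.bag p := hs (by simp)
  have hz : z ∈ td.bag t ∩ pd.bag p := hs (by simp)
  rcases D.le_two t p x y z hx.1 hx.2 hy.1 hy.2 hz.1 hz.2 with h | h | h
  · exact hxy h
  · exact hxz h
  · exact hyz h
end

section
/- For every k ≥ 1, the Burling graph G_k admits a tree-decomposition (T, {B_t}) and a path-decomposition (P, {B_p}) satisfying simultaneously: (1) |B_t ∩ B_p| ≤ 2 for every t ∈ V(T) and p ∈ V(P); (2) for every S ∈ 𝒮(G_k) there exists t ∈ V(T) with B_t = S; and (3) |S ∩ B_p| ≤ 1 for every S ∈ 𝒮(G_k) and every p ∈ V(P). -/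
/-! ### Gluing copies of a rooted tree to a tree -/

/-- The adjacency relation of `glue`. -/
def glueAdj {ι κ J : Type} (T : SimpleGraph ι) (K : SimpleGraph κ) (a : J → ι) (r : κ) :
    ι ⊕ (J × κ) → ι ⊕ (J × κ) → Prop
  | Sum.inl x, Sum.inl y => T.Adj x y
  | Sum.inr (j, x), Sum.inr (j', y) => j = j' ∧ K.Adj x y
  | Sum.inl x, Sum.inr (j, y) => x = a j ∧ y = r
  | Sum.inr (j, y), Sum.inl x => x = a j ∧ y = r

/-- The disjoint union of `T` and of one copy of `K` for each `j : J`, where the copy of the root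
`r` of `K` with index `j` is joined to the vertex `a j` of `T`. -/
def glue {ι κ J : Type} (T : SimpleGraph ι) (K : SimpleGraph κ) (a : J → ι) (r : κ) :
    SimpleGraph (ι ⊕ (J × κ)) where
  Adj := glueAdj T K a r
  symm := ⟨by
    rintro (x | ⟨j, x⟩) (y | ⟨j', y⟩) h
    · exact T.symm.symm _ _ h
    · exact h
    · exact h
    · exact ⟨h.1.symm, K.symm.symm _ _ h.2⟩⟩
  loopless := ⟨by
    rintro (x | ⟨j, x⟩) h
    · exact T.loopless.irrefl x h
    · exact K.loopless.irrefl x h.2⟩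

/-- Reachability is preserved by a map which sends each edge to an edge or collapses it. -/
theorem reachable_of_contraction {V W : Type} {G : SimpleGraph V} {H : SimpleGraph W} (f : V → W)
    (hf : ∀ x y, G.Adj x y → f x = f y ∨ H.Adj (f x) (f y)) {x y : V} (h : G.Reachable x y) :
    H.Reachable (f x) (f y) := by
  obtain ⟨w⟩ := h
  induction w with
  | nil => exact SimpleGraph.Reachable.refl _
  | cons hadj _ ih =>
    rcases hf _ _ hadj with h | h
    · rw [h]; exact ih
    · exact h.reachable.trans ih

theorem connected_induce_image {V W : Type} {G : SimpleGraph V} {H : SimpleGraph W} (f : V → W)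
    (hf : ∀ x y, G.Adj x y → H.Adj (f x) (f y)) {s : Set V} (hs : (G.induce s).Connected) :
    (H.induce (f '' s)).Connected := by
  let g : G.induce s →g H.induce (f '' s) :=
    { toFun := fun x => ⟨f x.1, x.1, x.2, rfl⟩
      map_rel' := fun {x y} h => hf x.1 y.1 h }
  refine hs.map g ?_
  rintro ⟨_, x, hx, rfl⟩
  exact ⟨⟨x, hx⟩, rfl⟩

section Glue

variable {ι κ J : Type} {T : SimpleGraph ι} {K : SimpleGraph κ} {a : J → ι} {r : κ}

/-- Each edge of the glued graph is a bridge, as shown by contracting the graph onto `T`, onto a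
copy of `K`, or onto the edge itself. -/
theorem glue_isAcyclic (hT : T.IsAcyclic) (hK : K.IsAcyclic) : (glue T K a r).IsAcyclic := by
  classical
  rw [SimpleGraph.isAcyclic_iff_forall_adj_isBridge] at *
  -- An edge joining a copy of `K` to `T`: no other edge leaves that copy.
  have cross : ∀ j, ¬ ((glue T K a r).deleteEdges {s(Sum.inl (a j), Sum.inr (j, r))}).Reachable
      (Sum.inl (a j)) (Sum.inr (j, r)) := by
    intro j h
    have := reachable_of_contraction (H := (⊥ : SimpleGraph Bool))
      (fun z : ι ⊕ (J × κ) => match z with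
        | Sum.inl _ => false
        | Sum.inr (i, _) => decide (i = j)) (by
          rintro (x | ⟨i, x⟩) (y | ⟨i', y⟩) h
          · simp
          · simp only [SimpleGraph.deleteEdges_adj] at h
            obtain ⟨⟨rfl, rfl⟩, h⟩ := h
            left
            by_contra hc
            simp at hc
            subst hc
            simp at h
          · simp only [SimpleGraph.deleteEdges_adj] at h
            obtain ⟨⟨rfl, rfl⟩, h⟩ := h
            left
            by_contra hc
            simp at hc
            subst hc
            simp at h
          · simp only [SimpleGraph.deleteEdges_adj] at h
            obtain ⟨⟨rfl, -⟩, -⟩ := h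
            simp) h
    simp at this
  rintro (x | ⟨j, x⟩) (y | ⟨j', y⟩) h
  · rw [SimpleGraph.isBridge_iff]
    have hb := SimpleGraph.isBridge_iff.1 (hT (show T.Adj x y from h))
    intro hr
    refine hb (reachable_of_contraction (fun z : ι ⊕ (J × κ) => match z with
        | Sum.inl z => z
        | Sum.inr (i, _) => a i) ?_ hr)
    rintro (u | ⟨i, u⟩) (v | ⟨i', v⟩) h
    · right
      simp only [SimpleGraph.deleteEdges_adj] at h ⊢
      refine ⟨h.1, fun hc => h.2 ?_⟩
      simpa using hc
    · exact Or.inl h.1.1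
    · exact Or.inl h.1.1.symm
    · obtain ⟨⟨rfl, -⟩, -⟩ := h
      exact Or.inl rfl
  · rw [SimpleGraph.isBridge_iff]
    obtain ⟨rfl, rfl⟩ := h
    exact cross j'
  · rw [SimpleGraph.isBridge_iff]
    obtain ⟨rfl, rfl⟩ := h
    intro h
    rw [Sym2.eq_swap] at h
    exact cross j h.symm
  · rw [SimpleGraph.isBridge_iff]
    obtain ⟨rfl, h⟩ := h
    have hb := SimpleGraph.isBridge_iff.1 (hK h)
    intro hr
    have key := reachable_of_contraction (H := K.deleteEdges {s(x, y)})
      (fun z : ι ⊕ (J × κ) => match z with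
        | Sum.inl _ => r
        | Sum.inr (i, v) => if i = j then v else r) (by
      rintro (u | ⟨i, u⟩) (v | ⟨i', v⟩) h
      · exact Or.inl rfl
      · obtain ⟨⟨rfl, rfl⟩, -⟩ := h
        simp
      · obtain ⟨⟨rfl, rfl⟩, -⟩ := h
        simp
      · simp only [SimpleGraph.deleteEdges_adj] at h ⊢
        obtain ⟨⟨rfl, h1⟩, h2⟩ := h
        by_cases hi : i = j
        · right
          subst hi
          simp only [if_true]
          refine ⟨h1, fun hc => h2 ?_⟩
          simpa using hc
        · simp [hi]) hr
    simp only [if_true] at key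
    exact hb key

theorem glue_connected_copy {C : Set κ} (j : J) (hC : (K.induce C).Connected) :
    ((glue T K a r).induce ((fun c => Sum.inr (j, c)) '' C)).Connected :=
  connected_induce_image (H := glue T K a r) (fun c => Sum.inr (j, c)) (fun _ _ h => ⟨rfl, h⟩) hC

/-- A connected set of vertices of `T`, together with connected sets in some of the copies of `K`
that contain the root and are attached at vertices of the given set, is connected. -/
theorem glue_connected {A : Set ι} {C : J → Set κ} (hA : (T.induce A).Connected)
    (hC : ∀ j, (C j).Nonempty → (K.induce (C j)).Connected ∧ r ∈ C j ∧ a j ∈ A) :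
    ((glue T K a r).induce {z | match z with
      | Sum.inl x => x ∈ A
      | Sum.inr (j, c) => c ∈ C j}).Connected := by
  have hA' : ((glue T K a r).induce (Sum.inl '' A)).Connected :=
    connected_induce_image Sum.inl (fun _ _ h => h) hA
  obtain ⟨⟨u, hu⟩⟩ := hA.nonempty
  refine SimpleGraph.induce_connected_of_patches (Sum.inl u) hu ?_
  rintro (v | ⟨j, c⟩) hv
  · refine ⟨Sum.inl '' A, ?_, ⟨u, hu, rfl⟩, ⟨v, hv, rfl⟩, hA'.preconnected _ _⟩
    rintro _ ⟨x, hx, rfl⟩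
    exact hx
  · obtain ⟨h1, h2, h3⟩ := hC j ⟨c, hv⟩
    have hU := SimpleGraph.connected_induce_union (G := glue T K a r) (v := Sum.inl (a j))
      (w := Sum.inr (j, r)) hA'.preconnected (glue_connected_copy j h1).preconnected
      ⟨a j, h3, rfl⟩ ⟨r, h2, rfl⟩ ⟨rfl, rfl⟩
    refine ⟨_, ?_, Or.inl ⟨u, hu, rfl⟩, Or.inr ⟨c, hv, rfl⟩, hU.preconnected _ _⟩
    rintro _ (⟨x, hx, rfl⟩ | ⟨x, hx, rfl⟩)
    · exact hx
    · exact hx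

theorem glue_isTree (hT : T.IsTree) (hK : K.IsTree) : (glue T K a r).IsTree := by
  refine ⟨?_, glue_isAcyclic hT.isAcyclic hK.isAcyclic⟩
  have h := glue_connected (T := T) (K := K) (a := a) (r := r) (A := Set.univ)
    (C := fun _ => Set.univ)
    ((SimpleGraph.induceUnivIso T).connected_iff.2 hT.connected)
    (fun j _ => ⟨(SimpleGraph.induceUnivIso K).connected_iff.2 hK.connected, trivial, trivial⟩)
  refine h.map (SimpleGraph.Embedding.induce _).toHom ?_
  rintro (x | ⟨j, x⟩)
  · exact ⟨⟨Sum.inl x, trivial⟩, rfl⟩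
  · exact ⟨⟨Sum.inr (j, x), trivial⟩, rfl⟩

theorem bool_isTree : (⊤ : SimpleGraph Bool).IsTree := by
  refine ⟨SimpleGraph.connected_top, ?_⟩
  rw [SimpleGraph.isAcyclic_iff_forall_adj_isBridge]
  intro x y h
  rw [SimpleGraph.isBridge_iff]
  have hbot : (⊤ : SimpleGraph Bool).deleteEdges {s(x, y)} = ⊥ := by
    ext u v
    have hxy := h.ne
    cases x <;> cases y <;> cases u <;> cases v <;> simp_all
  rw [hbot, SimpleGraph.reachable_bot]
  exact h.ne

end Glue

/-! ### The inductive step -/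

/-- The existence of a tree-decomposition and a path-decomposition of `G` with the properties
(1), (2), (3) relative to the family `F`. -/
def BurlingGood (V : Type) (G : SimpleGraph V) (F : Set (Set V)) : Prop :=
  ∃ (td : TreeDecomposition V G) (pd : PathDecomposition V G),
    (∀ (t : td.ι) (p : pd.ι), (td.bag t ∩ pd.bag p).encard ≤ 2) ∧
    (∀ S ∈ F, ∃ t : td.ι, td.bag t = S) ∧
    (∀ S ∈ F, ∀ p : pd.ι, (S ∩ pd.bag p).encard ≤ 1)

section Step

variable {V : Type} {G : SimpleGraph V} {F : Set (Set V)}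

/-- The vertex `v` of the copy `H_S`. -/
abbrev copyV (S : F) (v : V) : BurlingVertexStep V F := Sum.inr (S, Sum.inl v)

/-- The new vertex `v_{S,X}`. -/
abbrev newV (S X : F) : BurlingVertexStep V F := Sum.inr (S, Sum.inr X)

/-- The bags of the new tree-decomposition. The index `(X, true)` stands for the leaf of the
two-node path attached at `t_X`, and `(X, false)` for its other node. -/
def stepTreeBag {ι : Type} (bag : ι → Set V) :
    ι ⊕ (F × (ι ⊕ (F × Bool))) → Set (BurlingVertexStep V F)
  | Sum.inl t => Sum.inl '' bag t
  | Sum.inr (S, Sum.inl t) => Sum.inl '' (S : Set V) ∪ copyV S '' bag t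
  | Sum.inr (S, Sum.inr (X, false)) =>
      Sum.inl '' (S : Set V) ∪ (copyV S '' (X : Set V) ∪ {newV S X})
  | Sum.inr (S, Sum.inr (X, true)) => Sum.inl '' (S : Set V) ∪ {newV S X}

/-- The bags of the new path-decomposition. -/
def stepPathBag {ι : Type} (bag : ι → Set V) : ι ⊕ (F × ι) → Set (BurlingVertexStep V F)
  | Sum.inl p => Sum.inl '' bag p
  | Sum.inr (S, p) => copyV S '' bag p ∪ Set.range (newV S)

/-- The edges of the step graph: those of the master copy, those of the copies `H_S`, and those
joining `v_{S,X}` to a vertex of `X`. -/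
theorem step_edge_cases {P : BurlingVertexStep V F → BurlingVertexStep V F → Prop}
    (hsymm : ∀ x y, P x y → P y x)
    (h1 : ∀ u v, G.Adj u v → P (Sum.inl u) (Sum.inl v))
    (h2 : ∀ S u v, G.Adj u v → P (copyV S u) (copyV S v))
    (h3 : ∀ (S X : F), ∀ v ∈ (X : Set V), P (newV S X) (copyV S v))
    ⦃x y : BurlingVertexStep V F⦄ (h : (SimpleGraph.fromRel (BurlingRel G F)).Adj x y) :
    P x y := by
  have key : ∀ x y, BurlingRel G F x y → P x y := by
    rintro (u | ⟨S, u | X⟩) (v | ⟨S', v | X'⟩) h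
    · exact h1 u v h
    · exact h.elim
    · exact h.elim
    · exact h.elim
    · obtain ⟨rfl, h⟩ := h
      exact h2 S u v h
    · exact h.elim
    · exact h.elim
    · obtain ⟨rfl, h⟩ := h
      exact h3 S X v h
    · exact h.elim
  rcases h.2 with h | h
  · exact key _ _ h
  · exact hsymm _ _ (key _ _ h)

/-- The tree-decomposition of the step graph, where `t S` is a node with bag `S` and `root` is
an arbitrary node of the given tree. -/
def stepTree (td : TreeDecomposition V G) (t : F → td.ι) (ht : ∀ S : F, td.bag (t S) = S)
    (root : td.ι) :
    TreeDecomposition (BurlingVertexStep V F) (SimpleGraph.fromRel (BurlingRel G F)) where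
  ι := td.ι ⊕ (F × (td.ι ⊕ (F × Bool)))
  T := glue td.T (glue td.T (⊤ : SimpleGraph Bool) t false) t (Sum.inl root)
  isTree := glue_isTree td.isTree (glue_isTree td.isTree bool_isTree)
  bag := stepTreeBag td.bag
  edge_mem := by
    refine step_edge_cases ?_ ?_ ?_ ?_
    · rintro x y ⟨s, hx, hy⟩
      exact ⟨s, hy, hx⟩
    · intro u v h
      obtain ⟨s, hu, hv⟩ := td.edge_mem h
      exact ⟨Sum.inl s, ⟨u, hu, rfl⟩, ⟨v, hv, rfl⟩⟩
    · intro S u v h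
      obtain ⟨s, hu, hv⟩ := td.edge_mem h
      exact ⟨Sum.inr (S, Sum.inl s), Or.inr ⟨u, hu, rfl⟩, Or.inr ⟨v, hv, rfl⟩⟩
    · intro S X v hv
      exact ⟨Sum.inr (S, Sum.inr (X, false)), Or.inr (Or.inr rfl), Or.inr (Or.inl ⟨v, hv, rfl⟩)⟩
  support_connected := by
    have hD := glue_isTree (a := t) (r := false) td.isTree bool_isTree
    rintro (u | ⟨S, u | X⟩)
    -- The nodes containing a master vertex `u`: those of its old subtree, and the whole tree
    -- attached at `t S` for each `S` containing `u`.
    · have h := glue_connected (K := glue td.T (⊤ : SimpleGraph Bool) t false) (a := t)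
        (r := Sum.inl root) (C := fun S : F => {_c | u ∈ (S : Set V)}) (td.support_connected u) (by
          rintro S ⟨_, hS⟩
          change u ∈ (S : Set V) at hS
          refine ⟨?_, hS, ?_⟩
          · rw [Set.eq_univ_of_forall (s := {_c | u ∈ (S : Set V)}) (fun _ => hS)]
            exact (SimpleGraph.induceUnivIso _).connected_iff.2 hD.connected
          · change u ∈ td.bag (t S)
            rw [ht]
            exact hS)
      refine (congrArg (fun s => (SimpleGraph.induce s _).Connected) ?_).mp h
      ext (s | ⟨S, s | ⟨X, _ | _⟩⟩) <;> simp [stepTreeBag]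
    -- For a vertex `u` of the copy `H_S`: its old subtree, and `(X, false)` for each `X` containing
    -- `u`.
    · have h := glue_connected (K := (⊤ : SimpleGraph Bool)) (a := t)
        (r := false) (C := fun X : F => {c | c = false ∧ u ∈ (X : Set V)})
        (td.support_connected u) (by
          rintro X ⟨-, -, hX⟩
          refine ⟨?_, ⟨rfl, hX⟩, ?_⟩
          · have : {c : Bool | c = false ∧ u ∈ (X : Set V)} = {false} := by
              ext c
              simp [hX]
            rw [this]
            exact SimpleGraph.IsTree.of_subsingleton.connected
          · change u ∈ td.bag (t X)
            rw [ht]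
            exact hX)
      refine (congrArg (fun s => (SimpleGraph.induce s _).Connected) ?_).mp
        (glue_connected_copy (T := td.T) (a := t) (r := Sum.inl root) S h)
      ext (s | ⟨S', s | ⟨X, _ | _⟩⟩) <;> simp [stepTreeBag] <;> grind
    -- For `v_{S,X}`: the two nodes `(X, false)` and `(X, true)`.
    · have h := glue_connected_copy (T := td.T) (a := t) (r := false) X
        ((SimpleGraph.induceUnivIso _).connected_iff.2 bool_isTree.connected)
      refine (congrArg (fun s => (SimpleGraph.induce s _).Connected) ?_).mp
        (glue_connected_copy (T := td.T) (a := t) (r := Sum.inl root) S h)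
      ext (s | ⟨S', s | ⟨X', _ | _⟩⟩) <;> simp [stepTreeBag, eq_comm]

theorem ordConnected_sum_inl {α β : Type} [LinearOrder α] [LinearOrder β] {A : Set α}
    (hA : A.OrdConnected) : {z : α ⊕ₗ β | ∃ p ∈ A, z = toLex (Sum.inl p)}.OrdConnected := by
  refine ⟨?_⟩
  rintro _ ⟨p, hp, rfl⟩ _ ⟨q, hq, rfl⟩ z ⟨hz1, hz2⟩
  induction z using Lex.rec with | h z => ?_
  rcases z with z | z
  · exact ⟨z, hA.out hp hq ⟨Sum.Lex.inl_le_inl_iff.1 hz1, Sum.Lex.inl_le_inl_iff.1 hz2⟩, rfl⟩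
  · exact (Sum.Lex.not_inr_le_inl hz2).elim

theorem ordConnected_sum_inr {α β : Type} [LinearOrder α] [LinearOrder β] {A : Set α} (S : β)
    (hA : A.OrdConnected) :
    {z : α ⊕ₗ (β ×ₗ α) | ∃ p ∈ A, z = toLex (Sum.inr (toLex (S, p)))}.OrdConnected := by
  refine ⟨?_⟩
  rintro _ ⟨p, hp, rfl⟩ _ ⟨q, hq, rfl⟩ z ⟨hz1, hz2⟩
  induction z using Lex.rec with | h z => ?_
  rcases z with z | z
  · exact (Sum.Lex.not_inr_le_inl hz1).elim
  · induction z using Lex.rec with | h z => ?_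
    obtain ⟨S', r⟩ := z
    rw [Sum.Lex.inr_le_inr_iff, Prod.Lex.toLex_le_toLex'] at hz1 hz2
    obtain rfl : S = S' := le_antisymm hz1.1 hz2.1
    exact ⟨r, hA.out hp hq ⟨hz1.2 rfl, hz2.2 rfl⟩, rfl⟩

/-- The path-decomposition of the step graph: the path of the master copy is followed by the
paths of the copies `H_S`, in an arbitrary order. -/
noncomputable def stepPath (pd : PathDecomposition V G) (hne : Nonempty pd.ι) :
    PathDecomposition (BurlingVertexStep V F) (SimpleGraph.fromRel (BurlingRel G F)) :=
  letI := Classical.decRel (WellOrderingRel (α := F))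
  letI : LinearOrder pd.ι := pd.linOrd
  letI : LinearOrder F := linearOrderOfSTO WellOrderingRel
  { ι := pd.ι ⊕ₗ (F ×ₗ pd.ι)
    bag := fun p => stepPathBag pd.bag (Sum.map id ofLex (ofLex p))
    edge_mem := by
      refine step_edge_cases ?_ ?_ ?_ ?_
      · rintro x y ⟨s, hx, hy⟩
        exact ⟨s, hy, hx⟩
      · intro u v h
        obtain ⟨s, hu, hv⟩ := pd.edge_mem h
        exact ⟨toLex (Sum.inl s), ⟨u, hu, rfl⟩, ⟨v, hv, rfl⟩⟩
      · intro S u v h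
        obtain ⟨s, hu, hv⟩ := pd.edge_mem h
        exact ⟨toLex (Sum.inr (toLex (S, s))), Or.inl ⟨u, hu, rfl⟩, Or.inl ⟨v, hv, rfl⟩⟩
      · intro S X v _
        obtain ⟨p, hp⟩ := pd.support_nonempty v
        exact ⟨toLex (Sum.inr (toLex (S, p))), Or.inr ⟨X, rfl⟩, Or.inl ⟨v, hp, rfl⟩⟩
    support_nonempty := by
      rintro (u | ⟨S, u | X⟩)
      · obtain ⟨p, hp⟩ := pd.support_nonempty u
        exact ⟨toLex (Sum.inl p), u, hp, rfl⟩
      · obtain ⟨p, hp⟩ := pd.support_nonempty u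
        exact ⟨toLex (Sum.inr (toLex (S, p))), Or.inl ⟨u, hp, rfl⟩⟩
      · exact ⟨toLex (Sum.inr (toLex (S, hne.some))), Or.inr ⟨X, rfl⟩⟩
    support_interval := by
      rintro (u | ⟨S, u | X⟩)
      · have e : {p : pd.ι ⊕ₗ (F ×ₗ pd.ι) | (Sum.inl u : BurlingVertexStep V F) ∈
            stepPathBag pd.bag (Sum.map id ofLex (ofLex p))} =
            {z | ∃ p ∈ {p | u ∈ pd.bag p}, z = toLex (Sum.inl p)} := by
          ext z
          induction z using Lex.rec with | h z => ?_
          rcases z with z | z <;> simp [stepPathBag]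
        exact e ▸ ordConnected_sum_inl (pd.support_interval u)
      · have e : {p : pd.ι ⊕ₗ (F ×ₗ pd.ι) | (copyV S u : BurlingVertexStep V F) ∈
            stepPathBag pd.bag (Sum.map id ofLex (ofLex p))} =
            {z | ∃ p ∈ {p | u ∈ pd.bag p}, z = toLex (Sum.inr (toLex (S, p)))} := by
          ext z
          induction z using Lex.rec with | h z => ?_
          rcases z with z | z
          · simp [stepPathBag]
          · induction z using Lex.rec with | h z => ?_
            simp [stepPathBag, Prod.ext_iff, eq_comm, and_comm]
        exact e ▸ ordConnected_sum_inr S (pd.support_interval u)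
      · have e : {p : pd.ι ⊕ₗ (F ×ₗ pd.ι) | (newV S X : BurlingVertexStep V F) ∈
            stepPathBag pd.bag (Sum.map id ofLex (ofLex p))} =
            {z | ∃ p ∈ Set.univ, z = toLex (Sum.inr (toLex (S, p)))} := by
          ext z
          induction z using Lex.rec with | h z => ?_
          rcases z with z | z
          · simp [stepPathBag]
          · induction z using Lex.rec with | h z => ?_
            simp [stepPathBag, Prod.ext_iff, eq_comm]
        exact e ▸ ordConnected_sum_inr S Set.ordConnected_univ }

theorem burlingGood_step (h : BurlingGood V G F) (hV : Nonempty V) :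
    BurlingGood (BurlingVertexStep V F) (SimpleGraph.fromRel (BurlingRel G F)) (BurlingFam F) := by
  obtain ⟨td, pd, h1, h2, h3⟩ := h
  choose t ht using fun S : F => h2 S S.2
  obtain ⟨root⟩ := td.isTree.connected.nonempty
  have hne : Nonempty pd.ι := ⟨(pd.support_nonempty hV.some).choose⟩
  -- It suffices to consider the bags for the index type without its order.
  suffices H : (∀ s p, (stepTreeBag (F := F) td.bag s ∩ stepPathBag pd.bag p).encard ≤ 2) ∧
      (∀ A ∈ BurlingFam F, ∃ s, stepTreeBag td.bag s = A) ∧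
      (∀ A ∈ BurlingFam F, ∀ p, (A ∩ stepPathBag pd.bag p).encard ≤ 1) from
    ⟨stepTree td t ht root, stepPath pd hne, fun s p => H.1 s _, H.2.1, fun A hA p => H.2.2 A hA _⟩
  refine ⟨?_, ?_, ?_⟩
  · have hcap : ∀ (A B : Set V) (f : V → BurlingVertexStep V F) (n : ℕ∞),
        (A ∩ B).encard ≤ n → (f '' (A ∩ B)).encard ≤ n :=
      fun A B f n h => (Set.encard_image_le f _).trans h
    rintro (s | ⟨S, s | ⟨X, _ | _⟩⟩) (p | ⟨S', p⟩)
    · refine (Set.encard_le_encard ?_).trans (hcap _ _ Sum.inl _ (h1 s p))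
      rintro _ ⟨⟨u, hu, rfl⟩, ⟨v, hv, hvu⟩⟩
      cases hvu
      exact ⟨u, ⟨hu, hv⟩, rfl⟩
    · refine (Set.encard_le_encard (t := ∅) ?_).trans (by simp)
      rintro _ ⟨⟨u, hu, rfl⟩, ⟨v, hv, hvu⟩ | ⟨v, hvu⟩⟩ <;> cases hvu
    · refine (Set.encard_le_encard ?_).trans
        (hcap _ _ Sum.inl _ ((h3 S S.2 p).trans one_le_two))
      rintro _ ⟨⟨u, hu, rfl⟩ | ⟨u, hu, rfl⟩, ⟨v, hv, hvu⟩⟩ <;> cases hvu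
      exact ⟨u, ⟨hu, hv⟩, rfl⟩
    · refine (Set.encard_le_encard ?_).trans (hcap _ _ (copyV S) _ (h1 s p))
      rintro _ ⟨⟨u, hu, rfl⟩ | ⟨u, hu, rfl⟩, ⟨v, hv, hvu⟩ | ⟨v, hvu⟩⟩ <;> cases hvu
      exact ⟨u, ⟨hu, hv⟩, rfl⟩
    · refine (Set.encard_le_encard ?_).trans
        (hcap _ _ Sum.inl _ ((h3 S S.2 p).trans one_le_two))
      rintro _ ⟨⟨u, hu, rfl⟩ | ⟨u, hu, rfl⟩ | rfl, ⟨v, hv, hvu⟩⟩ <;> cases hvu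
      exact ⟨u, ⟨hu, hv⟩, rfl⟩
    · refine (Set.encard_le_encard (t := copyV S '' ((X : Set V) ∩ pd.bag p) ∪ {newV S X})
        ?_).trans ((Set.encard_union_le _ _).trans ?_)
      · rintro _ ⟨⟨u, hu, rfl⟩ | ⟨u, hu, rfl⟩ | rfl, ⟨v, hv, hvu⟩ | ⟨v, hvu⟩⟩ <;> cases hvu
        · exact Or.inl ⟨u, ⟨hu, hv⟩, rfl⟩
        · exact Or.inr rfl
      · rw [Set.encard_singleton, ← one_add_one_eq_two]
        exact add_le_add_left (hcap _ _ _ _ (h3 X X.2 p)) 1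
    · refine (Set.encard_le_encard ?_).trans
        (hcap _ _ Sum.inl _ ((h3 S S.2 p).trans one_le_two))
      rintro _ ⟨⟨u, hu, rfl⟩ | rfl, ⟨v, hv, hvu⟩⟩ <;> cases hvu
      exact ⟨u, ⟨hu, hv⟩, rfl⟩
    · refine (Set.encard_le_encard (t := {newV S X}) ?_).trans
        ((Set.encard_singleton _).trans_le one_le_two)
      rintro _ ⟨⟨u, hu, rfl⟩ | rfl, ⟨v, hv, hvu⟩ | ⟨v, hvu⟩⟩ <;> cases hvu
      rfl
  · rintro A ⟨S, X, rfl | rfl⟩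
    · refine ⟨Sum.inr (S, Sum.inl (t X)), ?_⟩
      simp only [stepTreeBag, ht]
    · exact ⟨Sum.inr (S, Sum.inr (X, true)), rfl⟩
  · simp only [Set.encard_le_one_iff] at h3 ⊢
    rintro A ⟨S, X, rfl | rfl⟩ (p | ⟨S', p⟩)
    · rintro _ _ ⟨⟨u, hu, rfl⟩ | ⟨u, hu, rfl⟩, ⟨u', hu', e⟩⟩
        ⟨⟨v, hv, rfl⟩ | ⟨v, hv, rfl⟩, ⟨v', hv', e'⟩⟩ <;> cases e <;> cases e'
      rw [h3 S S.2 p u v ⟨hu, hu'⟩ ⟨hv, hv'⟩]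
    · rintro _ _ ⟨⟨u, hu, rfl⟩ | ⟨u, hu, rfl⟩, ⟨u', hu', e⟩ | ⟨u', e⟩⟩
        ⟨⟨v, hv, rfl⟩ | ⟨v, hv, rfl⟩, ⟨v', hv', e'⟩ | ⟨v', e'⟩⟩ <;> cases e <;> cases e'
      rw [h3 X X.2 p u v ⟨hu, hu'⟩ ⟨hv, hv'⟩]
    · rintro _ _ ⟨⟨u, hu, rfl⟩ | rfl, ⟨u', hu', e⟩⟩
        ⟨⟨v, hv, rfl⟩ | rfl, ⟨v', hv', e'⟩⟩ <;> cases e <;> cases e'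
      rw [h3 S S.2 p u v ⟨hu, hu'⟩ ⟨hv, hv'⟩]
    · rintro _ _ ⟨⟨u, hu, rfl⟩ | rfl, ⟨u', hu', e⟩ | ⟨u', e⟩⟩
        ⟨⟨v, hv, rfl⟩ | rfl, ⟨v', hv', e'⟩ | ⟨v', e'⟩⟩ <;> cases e <;> cases e'
      rfl

end Step

/-- For `G_1` the tree and the path have a single node. -/
theorem burlingGood_zero : BurlingGood Unit ⊥ {Set.univ} := by
  refine ⟨⟨Unit, ⊥, SimpleGraph.IsTree.of_subsingleton, fun _ => Set.univ, fun _ _ h => h.elim,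
    fun v => ?_⟩, ⟨Unit, fun _ => Set.univ, fun _ _ h => h.elim, fun v => ⟨(), trivial⟩,
    fun v => Set.ordConnected_univ⟩, ?_, ?_, ?_⟩
  · exact (SimpleGraph.induceUnivIso _).connected_iff.2
      (SimpleGraph.IsTree.of_subsingleton).connected
  · intro _ _
    simp
  · rintro S rfl
    exact ⟨(), rfl⟩
  · rintro S rfl p
    simp

theorem burlingGood_aux (n : ℕ) : Nonempty (burlingAux n).1 ∧
    BurlingGood (burlingAux n).1 (burlingAux n).2.1 (burlingAux n).2.2 := by
  induction n with
  | zero => exact ⟨⟨()⟩, burlingGood_zero⟩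
  | succ n ih => exact ⟨ih.1.map Sum.inl, burlingGood_step ih.2 ih.1⟩

/-- For every `k ≥ 1`, the Burling graph `G_k` has a tree-decomposition
`(T, {B_t})` and a path-decomposition `(P, {B_p})` such that simultaneously:
(1) `|B_t ∩ B_p| ≤ 2` for every `t ∈ V(T)` and `p ∈ V(P)`;
(2) every `S ∈ 𝒮(G_k)` occurs as a bag `B_t` of the tree-decomposition; and
(3) `|S ∩ B_p| ≤ 1` for every `S ∈ 𝒮(G_k)` and every `p ∈ V(P)`. -/
theorem burling_decompositions_with_properties :
    ∀ k : ℕ, 1 ≤ k →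
      ∃ (td : TreeDecomposition (BurlingVertex k) (BurlingGraph k))
        (pd : PathDecomposition (BurlingVertex k) (BurlingGraph k)),
        (∀ (t : td.ι) (p : pd.ι), (td.bag t ∩ pd.bag p).encard ≤ 2) ∧
        (∀ S ∈ BurlingFamily k, ∃ t : td.ι, td.bag t = S) ∧
        (∀ S ∈ BurlingFamily k, ∀ p : pd.ι, (S ∩ pd.bag p).encard ≤ 1) := by
  intro k _
  exact (burlingGood_aux (k - 1)).2
end

section
/- For every n ≥ 1 there exists a triangle-free graph G with chromatic number at least n that admits a tree-decomposition (T, {B_t}) and a path-decomposition (P, {B_p}) such that |B_t ∩ B_p| ≤ 2 for every t ∈ V(T) and p ∈ V(P). Consequently, there is no function f : ℕ → ℕ such that every graph admitting a tree-decomposition and a path-decomposition with all pairwise bag intersections of size at most 2 has chromatic number at most f(2). -/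
/-! ### Rooted trees -/

/-- A rooted tree, given by a parent map that fixes the root and strictly decreases a rank
everywhere else. -/
structure ParentTree where
  N : Type
  root : N
  parent : N → N
  rank : N → ℕ
  parent_root : parent root = root
  rank_lt : ∀ t, t ≠ root → rank (parent t) < rank t

namespace ParentTree

variable (R : ParentTree)

/-- The underlying graph, joining each node other than the root to its parent. -/
def graph : SimpleGraph R.N where
  Adj s t := s ≠ t ∧ (R.parent s = t ∨ R.parent t = s)
  symm := ⟨fun _ _ h => ⟨h.1.symm, h.2.symm⟩⟩
  loopless := ⟨fun _ h => h.1 rfl⟩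

lemma rank_le (t : R.N) : R.rank (R.parent t) ≤ R.rank t := by
  by_cases h : t = R.root
  · rw [h, R.parent_root]
  · exact (R.rank_lt t h).le

lemma rank_iterate_le (n : ℕ) (t : R.N) : R.rank (R.parent^[n] t) ≤ R.rank t := by
  induction n generalizing t with
  | zero => rfl
  | succ n ih => exact (ih _).trans (R.rank_le t)

/-- A set of nodes closed under taking parents, up to a top node `a`, spans a subtree. -/
lemma induce_connected (A : Set R.N) (a : R.N) (ha : a ∈ A)
    (h : ∀ t ∈ A, t ≠ a → t ≠ R.root ∧ R.parent t ∈ A) :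
    (SimpleGraph.induce A R.graph).Connected := by
  rw [SimpleGraph.connected_iff_exists_forall_reachable]
  refine ⟨⟨a, ha⟩, ?_⟩
  suffices H : ∀ n t, ∀ ht : t ∈ A, R.rank t = n →
      (SimpleGraph.induce A R.graph).Reachable ⟨a, ha⟩ ⟨t, ht⟩ from
    fun w => H _ w.1 w.2 rfl
  intro n
  induction n using Nat.strong_induction_on with
  | _ n ih =>
    intro t ht hn
    by_cases hta : t = a
    · subst hta
      exact SimpleGraph.Reachable.refl _
    · obtain ⟨hr, hp⟩ := h t ht hta
      have hlt := R.rank_lt t hr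
      refine (ih _ (hn ▸ hlt) _ hp rfl).trans (SimpleGraph.Adj.reachable ?_)
      refine ⟨?_, Or.inr rfl⟩
      intro e
      simp only [Function.Embedding.subtype_apply] at e
      rw [e] at hlt
      exact lt_irrefl _ hlt

/-- The edge from `u` to its parent is a bridge, since it is the only edge leaving the set of
descendants of `u`. -/
lemma not_reachable_parent (u : R.N) (hu : u ≠ R.parent u) :
    ¬ (R.graph.deleteEdges {s(u, R.parent u)}).Reachable u (R.parent u) := by
  have hroot : u ≠ R.root := by
    rintro rfl
    exact hu R.parent_root.symm
  have closed : ∀ x y, (R.graph.deleteEdges {s(u, R.parent u)}).Adj x y →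
      (∃ n, R.parent^[n] x = u) → ∃ n, R.parent^[n] y = u := by
    rintro x y hxy ⟨n, hn⟩
    rw [SimpleGraph.deleteEdges_adj] at hxy
    obtain ⟨⟨hne, h | h⟩, hdel⟩ := hxy
    · cases n with
      | zero =>
        refine absurd ?_ hdel
        simp only [Function.iterate_zero, id] at hn
        simp [← h, hn]
      | succ n =>
        exact ⟨n, by rw [← h]; exact hn⟩
    · exact ⟨n + 1, by rw [Function.iterate_succ_apply, h]; exact hn⟩
  rintro ⟨w⟩
  have key : ∀ x y, (R.graph.deleteEdges {s(u, R.parent u)}).Walk x y →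
      (∃ n, R.parent^[n] x = u) → ∃ n, R.parent^[n] y = u := by
    intro x y w
    induction w with
    | nil => exact id
    | cons h _ ih => exact fun hx => ih (closed _ _ h hx)
  obtain ⟨n, hn⟩ := key _ _ w ⟨0, rfl⟩
  have h1 := R.rank_iterate_le n (R.parent u)
  have h2 := R.rank_lt u hroot
  rw [hn] at h1
  omega

lemma isTree : R.graph.IsTree where
  connected := by
    rw [← (SimpleGraph.induceUnivIso R.graph).connected_iff]
    refine R.induce_connected Set.univ R.root trivial fun t _ ht => ⟨ht, trivial⟩
  isAcyclic := by
    rw [SimpleGraph.isAcyclic_iff_forall_isBridge]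
    intro e
    induction e using Sym2.ind with
    | _ u v =>
      intro huv
      obtain ⟨hne, h | h⟩ : R.graph.Adj u v := huv
      · subst h
        exact R.not_reachable_parent u hne
      · subst h
        rw [Sym2.eq_swap]
        exact R.not_reachable_parent v hne.symm

end ParentTree

/-! ### Families of boxes in the product of a tree and a path -/

/-- A family of boxes indexed by `V`, together with probes indexed by `F`. The box of `v` is the
product of the subtree `{t | mem v t}`, whose node nearest to the root is `top v`, and the interval
`[lo v, hi v]` of the path on `{0, …, m - 1}`. The probe `f` is the tree node `node f`.
No three boxes share a point (`no_three`), and no two boxes share a point over a probe (`no_two`);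
thus the boxes over a probe are the analogue of a distinguished stable set. -/
structure BoxFamily extends ParentTree where
  V : Type
  F : Type
  mem : V → N → Prop
  top : V → N
  lo : V → ℕ
  hi : V → ℕ
  m : ℕ
  node : F → N
  node_inj : Function.Injective node
  mem_top : ∀ v, mem v (top v)
  mem_parent : ∀ v t, mem v t → t ≠ top v → t ≠ root ∧ mem v (parent t)
  lo_le_hi : ∀ v, lo v ≤ hi v
  hi_lt : ∀ v, hi v < m
  no_three : ∀ t p u v w,
    (mem u t ∧ lo u ≤ p ∧ p ≤ hi u) → (mem v t ∧ lo v ≤ p ∧ p ≤ hi v) →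
    (mem w t ∧ lo w ≤ p ∧ p ≤ hi w) → u = v ∨ u = w ∨ v = w
  no_two : ∀ f p u v,
    (mem u (node f) ∧ lo u ≤ p ∧ p ≤ hi u) → (mem v (node f) ∧ lo v ≤ p ∧ p ≤ hi v) → u = v

namespace BoxFamily

variable (C : BoxFamily)

/-- The intersection graph of the boxes. -/
def interGraph : SimpleGraph C.V where
  Adj u v := u ≠ v ∧ (∃ t, C.mem u t ∧ C.mem v t) ∧ C.lo u ≤ C.hi v ∧ C.lo v ≤ C.hi u
  symm := ⟨fun _ _ h => ⟨h.1.symm, h.2.1.imp fun _ ht => ht.symm, h.2.2.2, h.2.2.1⟩⟩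
  loopless := ⟨fun _ h => h.1 rfl⟩

/-- Two intersecting subtrees meet at the lower of their top nodes. -/
lemma mem_top_of_meet (u v : C.V) (h : C.rank (C.top v) ≤ C.rank (C.top u))
    (huv : ∃ t, C.mem u t ∧ C.mem v t) : C.mem v (C.top u) := by
  obtain ⟨t, hu, hv⟩ := huv
  suffices H : ∀ n t, C.rank t = n → C.mem u t → C.mem v t → C.mem v (C.top u) from
    H _ t rfl hu hv
  intro n
  induction n using Nat.strong_induction_on with
  | _ n ih =>
    intro t hn hu hv
    -- The top node has the least rank in its subtree.
    have rank_top : ∀ n t, C.rank t = n → C.mem u t → C.rank (C.top u) ≤ C.rank t := by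
      intro n
      induction n using Nat.strong_induction_on with
      | _ n ih =>
        intro t hn hu
        by_cases htu : t = C.top u
        · rw [htu]
        · obtain ⟨hr, hp⟩ := C.mem_parent u t hu htu
          have hlt := C.rank_lt t hr
          exact (ih _ (hn ▸ hlt) _ rfl hp).trans hlt.le
    by_cases htu : t = C.top u
    · rwa [← htu]
    · obtain ⟨hr, hp⟩ := C.mem_parent u t hu htu
      have hlt := C.rank_lt t hr
      by_cases htv : t = C.top v
      · have := rank_top _ _ rfl hp
        rw [← htv] at h
        omega
      · exact ih _ (hn ▸ hlt) _ rfl hp (C.mem_parent v t hv htv).2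

/-- Helly property: three pairwise intersecting boxes share a point, so `no_three` excludes
triangles. -/
lemma cliqueFree : C.interGraph.CliqueFree 3 := by
  classical
  intro s hs
  obtain ⟨u, v, w, huv, huw, hvw, -⟩ := SimpleGraph.is3Clique_iff.1 hs
  have path : ∃ p, (C.lo u ≤ p ∧ p ≤ C.hi u) ∧ (C.lo v ≤ p ∧ p ≤ C.hi v) ∧
      (C.lo w ≤ p ∧ p ≤ C.hi w) := by
    refine ⟨max (C.lo u) (max (C.lo v) (C.lo w)), ?_⟩
    have := C.lo_le_hi u
    have := C.lo_le_hi v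
    have := C.lo_le_hi w
    have := huv.2.2
    have := huw.2.2
    have := hvw.2.2
    omega
  have tree : ∃ t, C.mem u t ∧ C.mem v t ∧ C.mem w t := by
    have huv := huv.2.1
    have huw := huw.2.1
    have hvw := hvw.2.1
    have hvu := huv.imp fun _ h => h.symm
    have hwu := huw.imp fun _ h => h.symm
    have hwv := hvw.imp fun _ h => h.symm
    rcases le_total (C.rank (C.top u)) (C.rank (C.top v)) with h1 | h1 <;>
      rcases le_total (C.rank (C.top v)) (C.rank (C.top w)) with h2 | h2 <;>
      rcases le_total (C.rank (C.top u)) (C.rank (C.top w)) with h3 | h3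
    all_goals first
      | exact ⟨C.top u, C.mem_top u, C.mem_top_of_meet u v (by omega) huv,
          C.mem_top_of_meet u w (by omega) huw⟩
      | exact ⟨C.top v, C.mem_top_of_meet v u (by omega) hvu, C.mem_top v,
          C.mem_top_of_meet v w (by omega) hvw⟩
      | exact ⟨C.top w, C.mem_top_of_meet w u (by omega) hwu,
          C.mem_top_of_meet w v (by omega) hwv, C.mem_top w⟩
  obtain ⟨p, hu, hv, hw⟩ := path
  obtain ⟨t, hu', hv', hw'⟩ := tree
  rcases C.no_three t p u v w ⟨hu', hu⟩ ⟨hv', hv⟩ ⟨hw', hw⟩ with h | h | h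
  · exact huv.1 h
  · exact huw.1 h
  · exact hvw.1 h

/-- The tree-decomposition whose bag at `t` consists of the boxes over `t`. -/
def treeDec : TreeDecomposition C.V C.interGraph where
  ι := C.N
  T := C.graph
  isTree := C.isTree
  bag t := {v | C.mem v t}
  edge_mem _ _ h := h.2.1
  support_connected v := C.induce_connected _ (C.top v) (C.mem_top v) (C.mem_parent v)

/-- The path-decomposition whose bag at `p` consists of the boxes whose interval contains `p`. -/
def pathDec : PathDecomposition C.V C.interGraph where
  ι := ℕ
  bag p := {v | C.lo v ≤ p ∧ p ≤ C.hi v}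
  edge_mem u v h := by
    refine ⟨max (C.lo u) (C.lo v), ?_⟩
    have := C.lo_le_hi u
    have := C.lo_le_hi v
    have := h.2.2
    simp only [Set.mem_ofPred_eq]
    omega
  support_nonempty v := ⟨C.lo v, le_rfl, C.lo_le_hi v⟩
  support_interval v := Set.ordConnected_Icc

lemma encard_inter_le (t : C.treeDec.ι) (p : C.pathDec.ι) :
    (C.treeDec.bag t ∩ C.pathDec.bag p).encard ≤ 2 := by
  by_contra! h
  have h3 : (3 : ℕ∞) ≤ (C.treeDec.bag t ∩ C.pathDec.bag p).encard := by
    have := Order.add_one_le_of_lt h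
    rwa [show (2 : ℕ∞) + 1 = 3 from rfl] at this
  obtain ⟨s, hs, hs3⟩ := Set.exists_subset_encard_eq h3
  obtain ⟨u, v, w, huv, huw, hvw, rfl⟩ := Set.encard_eq_three.1 hs3
  rcases C.no_three t p u v w (hs (by simp)) (hs (by simp)) (hs (by simp)) with h | h | h
  · exact huv h
  · exact huw h
  · exact hvw h

/-! ### The inductive step of the construction -/

/-- Boxes of the next family: the old ones, a copy of each for every probe `f`, and a new box for
every probe `x` of every copy. -/
inductive StepV (V F : Type) : Type
  | old (v : V)
  | copy (f : F) (v : V)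
  | new (f x : F)

/-- Nodes of the next tree: the old ones, a copy of each for every probe `f`, and two leaves below
every probe `x` of every copy. -/
inductive StepN (N F : Type) : Type
  | old (t : N)
  | copy (f : F) (t : N)
  | leaf (f x : F) (b : Bool)

/-- The copy of the tree with index `f` hangs below the node `node f` of the old tree. -/
noncomputable def stepParent : StepN C.N C.F → StepN C.N C.F
  | .old t => .old (C.parent t)
  | .copy f t => open Classical in
      if t = C.root then .old (C.node f) else .copy f (C.parent t)
  | .leaf f x _ => .copy f (C.node x)

/-- The rank in the next tree makes every node of the copy `f` rank above `node f`. -/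
def stepRank : StepN C.N C.F → ℕ
  | .old t => C.rank t
  | .copy f t => C.rank (C.node f) + 1 + C.rank t
  | .leaf f x _ => C.rank (C.node f) + 1 + (C.rank (C.node x) + 1)

/-- Subtrees of the boxes of the next family. An old box over `node f` is extended over everything
below that node. A copied box over `node x` is extended to the leaf `true` below `x`, whereas
the new box of `x` occupies `node x` and the leaf `false`. -/
def stepMem : StepV C.V C.F → StepN C.N C.F → Prop
  | .old v, .old t => C.mem v t
  | .old v, .copy f _ => C.mem v (C.node f)
  | .old v, .leaf f _ _ => C.mem v (C.node f)
  | .copy f v, .copy g t => f = g ∧ C.mem v t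
  | .copy f v, .leaf g x b => f = g ∧ b = true ∧ C.mem v (C.node x)
  | .new f x, .copy g t => f = g ∧ t = C.node x
  | .new f x, .leaf g y b => f = g ∧ x = y ∧ b = false
  | _, _ => False

def stepTop : StepV C.V C.F → StepN C.N C.F
  | .old v => .old (C.top v)
  | .copy f v => .copy f (C.top v)
  | .new f x => .copy f (C.node x)

def stepLo : StepV C.V C.F → ℕ
  | .old v => C.lo v
  | .copy _ v => C.m + C.lo v
  | .new _ _ => C.m

def stepHi : StepV C.V C.F → ℕ
  | .old v => C.hi v
  | .copy _ v => C.m + C.hi v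
  | .new _ _ => C.m + C.m

/-- The box of `u` contains the point `(t, p)`. -/
def StepAt (t : StepN C.N C.F) (p : ℕ) (u : StepV C.V C.F) : Prop :=
  C.stepMem u t ∧ C.stepLo u ≤ p ∧ p ≤ C.stepHi u

/-- Over a new probe below `f` and `x`, the left half of the path shows old boxes at `f` only. The
right half shows either the copied boxes at `x` or just one new box. -/
lemma stepAt_two (f x : C.F) (b : Bool) (p : ℕ) (u v : StepV C.V C.F)
    (hu : C.StepAt (.leaf f x b) p u) (hv : C.StepAt (.leaf f x b) p v) : u = v := by
  obtain ⟨hu, hu1, hu2⟩ := hu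
  obtain ⟨hv, hv1, hv2⟩ := hv
  have hlt := C.hi_lt
  cases u with
  | old u =>
    cases v with
    | old v => exact congrArg _ (C.no_two f p u v ⟨hu, hu1, hu2⟩ ⟨hv, hv1, hv2⟩)
    | _ => have := hlt u; simp only [stepLo, stepHi] at *; omega
  | copy g u =>
    obtain ⟨rfl, rfl, hu⟩ := hu
    cases v with
    | old v => have := hlt v; simp only [stepLo, stepHi] at *; omega
    | copy h v =>
      obtain ⟨rfl, -, hv⟩ := hv
      simp only [stepLo, stepHi] at *
      rw [C.no_two x (p - C.m) u v ⟨hu, by omega, by omega⟩ ⟨hv, by omega, by omega⟩]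
    | new h y => exact absurd hv.2.2 (by simp)
  | new g y =>
    obtain ⟨rfl, rfl, rfl⟩ := hu
    cases v with
    | old v => have := hlt v; simp only [stepLo, stepHi] at *; omega
    | copy h v => exact absurd hv.2.1 (by simp)
    | new h z =>
      obtain ⟨rfl, rfl, -⟩ := hv
      rfl

/-- The critical nodes are those of the copies of the tree. There the left half of the path shows at
most one box, by `no_two`. In the right half a new box is present only over a copied probe, where
`no_two` leaves room for it, and it is unique because probes are distinct nodes. -/
lemma stepAt_three (t : StepN C.N C.F) (p : ℕ) (u v w : StepV C.V C.F)
    (hu : C.StepAt t p u) (hv : C.StepAt t p v) (hw : C.StepAt t p w) :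
    u = v ∨ u = w ∨ v = w := by
  cases t with
  | leaf f x b => exact Or.inl (C.stepAt_two f x b p u v hu hv)
  | old t =>
    obtain ⟨hu, hu'⟩ := hu
    obtain ⟨hv, hv'⟩ := hv
    obtain ⟨hw, hw'⟩ := hw
    cases u with
    | old u =>
      cases v with
      | old v =>
        cases w with
        | old w =>
          simpa using C.no_three t p u v w ⟨hu, hu'⟩ ⟨hv, hv'⟩ ⟨hw, hw'⟩
        | _ => exact hw.elim
      | _ => exact hv.elim
    | _ => exact hu.elim
  | copy f t =>
    -- What the boxes over this node look like, in the left and in the right half of the path.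
    have cases_at : ∀ u, C.StepAt (.copy f t) p u →
        (p < C.m ∧ ∃ v, u = .old v ∧ C.mem v (C.node f) ∧ C.lo v ≤ p ∧ p ≤ C.hi v) ∨
        (C.m ≤ p ∧ ∃ v, u = .copy f v ∧ C.mem v t ∧ C.lo v ≤ p - C.m ∧ p - C.m ≤ C.hi v) ∨
        (C.m ≤ p ∧ ∃ x, u = .new f x ∧ t = C.node x) := by
      rintro (v | ⟨g, v⟩ | ⟨g, x⟩) ⟨h, h1, h2⟩
      · exact Or.inl ⟨h2.trans_lt (C.hi_lt v), v, rfl, h, h1, h2⟩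
      · obtain ⟨rfl, h⟩ := h
        simp only [stepLo, stepHi] at h1 h2
        exact Or.inr (Or.inl ⟨by omega, v, rfl, h, by omega, by omega⟩)
      · obtain ⟨rfl, h⟩ := h
        exact Or.inr (Or.inr ⟨h1, x, rfl, h⟩)
    rcases cases_at u hu with ⟨hp, u, rfl, hu₁⟩ | ⟨hp, u, rfl, hu₁⟩ | ⟨hp, x, rfl, hx⟩ <;>
      rcases cases_at v hv with ⟨hq, v, rfl, hv₁⟩ | ⟨hq, v, rfl, hv₁⟩ | ⟨hq, y, rfl, hy⟩ <;>
      try omega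
    · exact Or.inl (congrArg _ (C.no_two f p u v hu₁ hv₁))
    · rcases cases_at w hw with ⟨hr, -⟩ | ⟨-, w, rfl, hw₁⟩ | ⟨-, z, rfl, hz⟩
      · omega
      · simpa using C.no_three t (p - C.m) u v w hu₁ hv₁ hw₁
      · subst hz
        exact Or.inl (congrArg _ (C.no_two z (p - C.m) u v hu₁ hv₁))
    · subst hy
      rcases cases_at w hw with ⟨hr, -⟩ | ⟨-, w, rfl, hw₁⟩ | ⟨-, z, rfl, hz⟩
      · omega
      · exact Or.inr (Or.inl (congrArg _ (C.no_two y (p - C.m) u w hu₁ hw₁)))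
      · exact Or.inr (Or.inr (congrArg _ (C.node_inj hz)))
    · subst hx
      rcases cases_at w hw with ⟨hr, -⟩ | ⟨-, w, rfl, hw₁⟩ | ⟨-, z, rfl, hz⟩
      · omega
      · exact Or.inr (Or.inr (congrArg _ (C.no_two x (p - C.m) v w hv₁ hw₁)))
      · exact Or.inr (Or.inl (congrArg _ (C.node_inj hz)))
    · exact Or.inl (congrArg _ (C.node_inj (hx.symm.trans hy)))

/-- The next family. Its probes are the newly attached leaves. -/
noncomputable def step : BoxFamily where
  N := StepN C.N C.F
  root := .old C.root
  parent := C.stepParent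
  rank := C.stepRank
  parent_root := congrArg _ C.parent_root
  rank_lt := by
    rintro (t | ⟨f, t⟩ | ⟨f, x, b⟩) ht
    · exact C.rank_lt t fun h => ht (congrArg _ h)
    · by_cases h : t = C.root
      · simp only [stepParent, h, if_true, stepRank]
        omega
      · have := C.rank_lt t h
        simp only [stepParent, h, if_false, stepRank]
        omega
    · simp only [stepParent, stepRank]
      omega
  V := StepV C.V C.F
  F := C.F × C.F × Bool
  mem := C.stepMem
  top := C.stepTop
  lo := C.stepLo
  hi := C.stepHi
  m := C.m + C.m + 1
  node := fun q => .leaf q.1 q.2.1 q.2.2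
  node_inj := by
    rintro ⟨f, x, b⟩ ⟨g, y, c⟩ h
    simpa using h
  mem_top := by
    rintro (v | ⟨f, v⟩ | ⟨f, x⟩)
    · exact C.mem_top v
    · exact ⟨rfl, C.mem_top v⟩
    · exact ⟨rfl, rfl⟩
  mem_parent := by
    rintro (v | ⟨f, v⟩ | ⟨f, x⟩) (t | ⟨g, t⟩ | ⟨g, y, b⟩) hm ht
    · obtain ⟨h1, h2⟩ := C.mem_parent v t hm fun h => ht (congrArg _ h)
      exact ⟨by simpa using h1, h2⟩
    · refine ⟨by simp, ?_⟩
      by_cases h : t = C.root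
      · simp only [stepParent, h, if_true]
        exact hm
      · simp only [stepParent, h, if_false]
        exact hm
    · exact ⟨by simp, hm⟩
    · exact hm.elim
    · obtain ⟨rfl, hm⟩ := hm
      obtain ⟨h1, h2⟩ := C.mem_parent v t hm fun h => ht (congrArg _ h)
      refine ⟨by simp, ?_⟩
      simp only [stepParent, h1, if_false]
      exact ⟨rfl, h2⟩
    · exact ⟨by simp, hm.1, hm.2.2⟩
    · exact hm.elim
    · obtain ⟨rfl, rfl⟩ := hm
      exact (ht rfl).elim
    · obtain ⟨rfl, rfl, rfl⟩ := hm
      exact ⟨by simp, rfl, rfl⟩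
  lo_le_hi := by
    rintro (v | ⟨f, v⟩ | ⟨f, x⟩)
    · exact C.lo_le_hi v
    · exact Nat.add_le_add_left (C.lo_le_hi v) _
    · exact Nat.le_add_right _ _
  hi_lt := by
    rintro (v | ⟨f, v⟩ | ⟨f, x⟩)
    · have := C.hi_lt v
      simp only [stepHi]
      omega
    · have := C.hi_lt v
      simp only [stepHi]
      omega
    · exact Nat.lt_succ_self _
  no_three := C.stepAt_three
  no_two := fun q p u v => C.stepAt_two q.1 q.2.1 q.2.2 p u v

/-! ### Chromatic number -/

/-- In every proper coloring, the boxes over some probe receive at least `k` colors. -/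
def Rich (k : ℕ) : Prop :=
  ∀ (α : Type) (c : C.interGraph.Coloring α),
    ∃ f, (k : ℕ∞) ≤ (c '' {v | C.mem v (C.node f)}).encard

/-- The old family occurs unchanged in the next one, as does each of its copies. -/
def oldHom : C.interGraph →g C.step.interGraph where
  toFun := .old
  map_rel' := by
    rintro u v ⟨hne, ⟨t, hu, hv⟩, h⟩
    exact ⟨fun h => hne (StepV.old.inj h), ⟨.old t, hu, hv⟩, h⟩

def copyHom (f : C.F) : C.interGraph →g C.step.interGraph where
  toFun := .copy f
  map_rel' := by
    rintro u v ⟨hne, ⟨t, hu, hv⟩, h1, h2⟩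
    exact ⟨fun h => hne (StepV.copy.inj h).2, ⟨.copy f t, ⟨rfl, hu⟩, ⟨rfl, hv⟩⟩,
      Nat.add_le_add_left h1 _, Nat.add_le_add_left h2 _⟩

/-- The new box of the probe `x` meets every copied box over `x`. -/
lemma new_adj (f x : C.F) (v : C.V) (hv : C.mem v (C.node x)) :
    C.step.interGraph.Adj (StepV.new f x) (StepV.copy f v) := by
  have h1 := C.lo_le_hi v
  have h2 := C.hi_lt v
  refine ⟨(nofun : (StepV.new f x : StepV C.V C.F) ≠ .copy f v),
    ⟨.copy f (C.node x), ⟨rfl, rfl⟩, ⟨rfl, hv⟩⟩, ?_, ?_⟩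
  · exact Nat.le_add_right _ _
  · exact Nat.add_le_add_left (by omega) _

lemma rich_step (k : ℕ) (h : C.Rich k) : C.step.Rich (k + 1) := by
  intro α c
  obtain ⟨f, hf⟩ := h α (c.comp C.oldHom)
  obtain ⟨x, hx⟩ := h α (c.comp (C.copyHom f))
  set A := (c.comp C.oldHom) '' {v | C.mem v (C.node f)} with hA
  set B := (c.comp (C.copyHom f)) '' {v | C.mem v (C.node x)} with hB
  have hAsub : ∀ b, A ⊆ c '' {v | C.step.mem v (C.step.node (f, x, b))} := by
    rintro b _ ⟨v, hv, rfl⟩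
    exact ⟨StepV.old v, hv, rfl⟩
  have hBsub : B ⊆ c '' {v | C.step.mem v (C.step.node (f, x, true))} := by
    rintro _ ⟨v, hv, rfl⟩
    exact ⟨StepV.copy f v, ⟨rfl, rfl, hv⟩, rfl⟩
  have hnew : c (StepV.new f x) ∈ c '' {v | C.step.mem v (C.step.node (f, x, false))} :=
    ⟨StepV.new f x, ⟨rfl, rfl, rfl⟩, rfl⟩
  have hnB : c (StepV.new f x) ∉ B := by
    rintro ⟨v, hv, e⟩
    exact c.valid (C.new_adj f x v hv) e.symm
  -- A color outside `A` that occurs over a probe below `f` makes this probe rich.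
  have extend : ∀ b a, a ∉ A → a ∈ c '' {v | C.step.mem v (C.step.node (f, x, b))} →
      ((k + 1 : ℕ) : ℕ∞) ≤ (c '' {v | C.step.mem v (C.step.node (f, x, b))}).encard := by
    intro b a ha hb
    calc ((k + 1 : ℕ) : ℕ∞) = k + 1 := by push_cast; rfl
      _ ≤ A.encard + 1 := by gcongr
      _ = (insert a A).encard := (Set.encard_insert_of_notMem ha).symm
      _ ≤ _ := Set.encard_le_encard (Set.insert_subset hb (hAsub b))
  by_cases hBA : B ⊆ A
  · by_cases hn : c (StepV.new f x) ∈ A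
    · -- Here `A` contains `B` and one more color.
      refine ⟨(f, x, true), ?_⟩
      calc ((k + 1 : ℕ) : ℕ∞) = k + 1 := by push_cast; rfl
        _ ≤ B.encard + 1 := by gcongr
        _ = (insert (c (StepV.new f x)) B).encard := (Set.encard_insert_of_notMem hnB).symm
        _ ≤ A.encard := Set.encard_le_encard (Set.insert_subset hn hBA)
        _ ≤ _ := Set.encard_le_encard (hAsub true)
    · exact ⟨(f, x, false), extend false _ hn hnew⟩
  · obtain ⟨a, haB, haA⟩ := Set.not_subset.1 hBA
    exact ⟨(f, x, true), extend true a haA (hBsub haB)⟩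

/-- A single box over a single point. -/
def base : BoxFamily where
  N := Unit
  root := ()
  parent := id
  rank _ := 0
  parent_root := rfl
  rank_lt _ h := (h rfl).elim
  V := Unit
  F := Unit
  mem _ _ := True
  top _ := ()
  lo _ := 0
  hi _ := 0
  m := 1
  node := id
  node_inj := Function.injective_id
  mem_top _ := trivial
  mem_parent _ _ _ h := (h rfl).elim
  lo_le_hi _ := le_rfl
  hi_lt _ := one_pos
  no_three _ _ _ _ _ _ _ _ := Or.inl rfl
  no_two _ _ _ _ _ _ := rfl

lemma exists_rich (k : ℕ) : ∃ C : BoxFamily, C.Rich k := by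
  induction k with
  | zero => exact ⟨base, fun _ _ => ⟨(), by simp⟩⟩
  | succ k ih =>
    obtain ⟨C, hC⟩ := ih
    exact ⟨C.step, C.rich_step k hC⟩

lemma Rich.le_chromaticNumber {C : BoxFamily} {k : ℕ} (h : C.Rich k) :
    (k : ℕ∞) ≤ C.interGraph.chromaticNumber := by
  rw [SimpleGraph.le_chromaticNumber_iff_coloring]
  intro m c
  obtain ⟨f, hf⟩ := h _ c
  have hm := hf.trans (Set.encard_le_encard (Set.subset_univ _))
  simpa [Set.encard_univ] using hm

end BoxFamily

/-- For every `n ≥ 1` there is a triangle-free graph `G` with chromatic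
number at least `n` admitting a tree-decomposition and a path-decomposition all of whose
pairwise bag intersections have size at most `2`. Consequently, there is no function
`f : ℕ → ℕ` such that every graph admitting such a pair of decompositions has chromatic
number at most `f 2`. -/
theorem triangle_free_unbounded_chromatic_with_orthogonal_decompositions :
    (∀ n : ℕ, 1 ≤ n →
      ∃ (V : Type) (G : SimpleGraph V),
        G.CliqueFree 3 ∧ (n : ℕ∞) ≤ G.chromaticNumber ∧
        ∃ (td : TreeDecomposition V G) (pd : PathDecomposition V G),
          ∀ (t : td.ι) (p : pd.ι), (td.bag t ∩ pd.bag p).encard ≤ 2) ∧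
    ¬ ∃ f : ℕ → ℕ, ∀ (V : Type) (G : SimpleGraph V),
        (∃ (td : TreeDecomposition V G) (pd : PathDecomposition V G),
          ∀ (t : td.ι) (p : pd.ι), (td.bag t ∩ pd.bag p).encard ≤ 2) →
        G.chromaticNumber ≤ (f 2 : ℕ∞) := by
  have main : ∀ n : ℕ, ∃ (V : Type) (G : SimpleGraph V),
      G.CliqueFree 3 ∧ (n : ℕ∞) ≤ G.chromaticNumber ∧
        ∃ (td : TreeDecomposition V G) (pd : PathDecomposition V G),
          ∀ (t : td.ι) (p : pd.ι), (td.bag t ∩ pd.bag p).encard ≤ 2 := by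
    intro n
    obtain ⟨C, hC⟩ := BoxFamily.exists_rich n
    exact ⟨C.V, C.interGraph, C.cliqueFree, hC.le_chromaticNumber, C.treeDec, C.pathDec,
      C.encard_inter_le⟩
  refine ⟨fun n _ => main n, ?_⟩
  rintro ⟨f, hf⟩
  obtain ⟨V, G, -, hG, hdec⟩ := main (f 2 + 1)
  have h := hG.trans (hf V G hdec)
  rw [Nat.cast_le] at h
  omega
end

section
/- For every k ≥ 1, the Burling graph G_k admits a path-decomposition (P, {B_p}_{p ∈ V(P)}) such that |S ∩ B_p| ≤ 1 for every S ∈ 𝒮(G_k) and every p ∈ V(P). -/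
/-- The index type of the blocks: the distinguished family, as a separate type so that it carries
an arbitrary linear order rather than the inclusion order of a set of sets. -/
def BurlingBlock {V : Type} (F : Set (Set V)) : Type := ↥F

open Classical in
noncomputable instance {V : Type} (F : Set (Set V)) : LinearOrder (BurlingBlock F) :=
  linearOrderOfSTO WellOrderingRel

/-- Incidence between positions and vertices in the decomposition of the next Burling graph.
Positions `Sum.inl p` form the block of the master copy, positions `Sum.inr (S, p)` the block of
`H_S`; every new vertex `v_{S,X}` lies in all bags of the block of `H_S`. -/
def BurlingIncidence {V ι : Type} {F : Set (Set V)} (B : ι → Set V) :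
    ι ⊕ (BurlingBlock F × ι) → BurlingVertexStep V F → Prop
  | Sum.inl p, Sum.inl v => v ∈ B p
  | Sum.inr (S, p), Sum.inr (T, Sum.inl v) => (S : ↥F) = T ∧ v ∈ B p
  | Sum.inr (S, _), Sum.inr (T, Sum.inr _) => (S : ↥F) = T
  | _, _ => False

/-- The position underlying a point of the lexicographic concatenation of the blocks. -/
def burlingPosition {V ι : Type} {F : Set (Set V)} (q : ι ⊕ₗ (BurlingBlock F ×ₗ ι)) :
    ι ⊕ (BurlingBlock F × ι) :=
  Sum.map id ofLex (ofLex q)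

/-- Each vertex occupies an interval of the concatenated blocks. -/
lemma burlingIncidence_ordConnected {V ι : Type} [LinearOrder ι] {F : Set (Set V)}
    (B : ι → Set V) (hB : ∀ v, {p | v ∈ B p}.OrdConnected)
    (x : BurlingVertexStep V F) :
    {q : ι ⊕ₗ (BurlingBlock F ×ₗ ι) | BurlingIncidence B (burlingPosition q) x}.OrdConnected := by
  refine ⟨?_⟩
  rcases x with v | ⟨T, v | X⟩
  · rintro (a | a) ha (b | b) hb (c | c) ⟨hac, hcb⟩
    · exact (hB v).out ha hb ⟨Sum.Lex.inl_le_inl_iff.1 hac, Sum.Lex.inl_le_inl_iff.1 hcb⟩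
    · exact absurd hcb Sum.Lex.not_inr_le_inl
    all_goals first | exact ha.elim | exact hb.elim
  all_goals
    rintro (a | ⟨S₁, a⟩) ha (b | ⟨S₂, b⟩) hb (c | ⟨S, c⟩) ⟨hac, hcb⟩
    all_goals first | exact ha.elim | exact hb.elim |
      exact absurd hac Sum.Lex.not_inr_le_inl | skip
  · obtain ⟨rfl, ha⟩ := ha
    obtain ⟨rfl, hb⟩ := hb
    obtain ⟨h₁, h₁'⟩ := Prod.Lex.le_iff'.1 (Sum.Lex.inr_le_inr_iff.1 hac)
    obtain ⟨h₂, h₂'⟩ := Prod.Lex.le_iff'.1 (Sum.Lex.inr_le_inr_iff.1 hcb)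
    obtain rfl := le_antisymm h₁ h₂
    exact ⟨rfl, (hB v).out ha hb ⟨h₁' rfl, h₂' rfl⟩⟩
  · obtain rfl : S₁ = T := ha
    obtain rfl : S₂ = S₁ := hb
    exact le_antisymm (Prod.Lex.le_iff'.1 (Sum.Lex.inr_le_inr_iff.1 hcb)).1
      (Prod.Lex.le_iff'.1 (Sum.Lex.inr_le_inr_iff.1 hac)).1

/-- The inductive step. The index type is required to be nonempty so that the new vertices, which
lie in all bags of their block, do lie in some bag. -/
lemma exists_pathDecomposition_step {V : Type} (G : SimpleGraph V) (F : Set (Set V))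
    (pd : PathDecomposition V G) (hne : Nonempty pd.ι)
    (hpd : ∀ S ∈ F, ∀ p : pd.ι, (S ∩ pd.bag p).encard ≤ 1) :
    ∃ pd' : PathDecomposition (BurlingVertexStep V F) (SimpleGraph.fromRel (BurlingRel G F)),
      Nonempty pd'.ι ∧ ∀ S ∈ BurlingFam F, ∀ p : pd'.ι, (S ∩ pd'.bag p).encard ≤ 1 := by
  let _ := pd.linOrd
  obtain ⟨p₀⟩ := hne
  have hrel : ∀ x y, BurlingRel G F x y → ∃ q : pd.ι ⊕ₗ (BurlingBlock F ×ₗ pd.ι),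
      BurlingIncidence pd.bag (burlingPosition q) x ∧
      BurlingIncidence pd.bag (burlingPosition q) y := by
    rintro (u | ⟨S, u | X⟩) (v | ⟨S', v | Y⟩) h
    · obtain ⟨p, hu, hv⟩ := pd.edge_mem h
      exact ⟨toLex (Sum.inl p), hu, hv⟩
    · exact h.elim
    · exact h.elim
    · exact h.elim
    · obtain ⟨rfl, h⟩ := h
      obtain ⟨p, hu, hv⟩ := pd.edge_mem h
      exact ⟨toLex (Sum.inr (toLex ((S, p) : BurlingBlock F × pd.ι))), ⟨rfl, hu⟩, ⟨rfl, hv⟩⟩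
    · exact h.elim
    · exact h.elim
    · obtain ⟨rfl, -⟩ := h
      obtain ⟨p, hv⟩ := pd.support_nonempty v
      exact ⟨toLex (Sum.inr (toLex ((S, p) : BurlingBlock F × pd.ι))), rfl, ⟨rfl, hv⟩⟩
    · exact h.elim
  refine ⟨{ ι := pd.ι ⊕ₗ (BurlingBlock F ×ₗ pd.ι)
            bag := fun q => {x | BurlingIncidence pd.bag (burlingPosition q) x}
            edge_mem := ?_
            support_nonempty := ?_
            support_interval := ?_ },
          ⟨toLex (Sum.inl p₀)⟩, ?_⟩
  · rintro x y ⟨-, h | h⟩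
    · exact hrel x y h
    · obtain ⟨q, hy, hx⟩ := hrel y x h
      exact ⟨q, hx, hy⟩
  · rintro (v | ⟨S, v | X⟩)
    · obtain ⟨p, hv⟩ := pd.support_nonempty v
      exact ⟨toLex (Sum.inl p), hv⟩
    · obtain ⟨p, hv⟩ := pd.support_nonempty v
      exact ⟨toLex (Sum.inr (toLex ((S, p) : BurlingBlock F × pd.ι))), rfl, hv⟩
    · exact ⟨toLex (Sum.inr (toLex ((S, p₀) : BurlingBlock F × pd.ι))), rfl⟩
  · intro x
    exact burlingIncidence_ordConnected pd.bag pd.support_interval x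
  · have hF : ∀ S : ↥F, ∀ p u v, u ∈ S.1 → v ∈ S.1 → u ∈ pd.bag p → v ∈ pd.bag p → u = v :=
      fun S p u v hu hv hup hvp =>
        Set.encard_le_one_iff.1 (hpd S.1 S.2 p) u v ⟨hu, hup⟩ ⟨hv, hvp⟩
    rintro A ⟨S, X, rfl | rfl⟩ (p | ⟨T, p⟩) <;> rw [Set.encard_le_one_iff]
    · rintro _ _ ⟨⟨u, hu, rfl⟩ | ⟨u, hu, rfl⟩, hu'⟩ ⟨⟨v, hv, rfl⟩ | ⟨v, hv, rfl⟩, hv'⟩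
      · exact congrArg _ (hF S p u v hu hv hu' hv')
      · exact hv'.elim
      · exact hu'.elim
      · exact hu'.elim
    · rintro _ _ ⟨⟨u, hu, rfl⟩ | ⟨u, hu, rfl⟩, hu'⟩ ⟨⟨v, hv, rfl⟩ | ⟨v, hv, rfl⟩, hv'⟩
      · exact hu'.elim
      · exact hu'.elim
      · exact hv'.elim
      · rw [hF X p u v hu hv hu'.2 hv'.2]
    · rintro _ _ ⟨⟨u, hu, rfl⟩ | rfl, hu'⟩ ⟨⟨v, hv, rfl⟩ | rfl, hv'⟩
      · exact congrArg _ (hF S p u v hu hv hu' hv')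
      · exact hv'.elim
      · exact hu'.elim
      · exact hu'.elim
    · rintro _ _ ⟨⟨u, hu, rfl⟩ | rfl, hu'⟩ ⟨⟨v, hv, rfl⟩ | rfl, hv'⟩
      · exact hu'.elim
      · exact hu'.elim
      · exact hv'.elim
      · rfl

lemma exists_pathDecomposition_burlingAux (n : ℕ) :
    ∃ pd : PathDecomposition (burlingAux n).1 (burlingAux n).2.1,
      Nonempty pd.ι ∧ ∀ S ∈ (burlingAux n).2.2, ∀ p : pd.ι, (S ∩ pd.bag p).encard ≤ 1 := by
  induction n with
  | zero =>
    refine ⟨{ ι := Unit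
              bag := fun _ => Set.univ
              edge_mem := fun _ _ _ => ⟨(), trivial, trivial⟩
              support_nonempty := fun _ => ⟨(), trivial⟩
              support_interval := fun _ => Set.ordConnected_univ }, ⟨()⟩, ?_⟩
    intro S _ p
    exact Set.encard_le_one_iff.2 fun a b _ _ => Subsingleton.elim (α := Unit) a b
  | succ n ih =>
    obtain ⟨pd, hne, hpd⟩ := ih
    exact exists_pathDecomposition_step _ _ pd hne hpd

/-- For every `k ≥ 1`, the Burling graph `G_k` admits a
path-decomposition `(P, {B_p})` such that `|S ∩ B_p| ≤ 1` for every `S ∈ 𝒮(G_k)` and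
every `p ∈ V(P)`. -/
theorem burling_path_decomposition_meets_family_in_at_most_one :
    ∀ k : ℕ, 1 ≤ k →
      ∃ pd : PathDecomposition (BurlingVertex k) (BurlingGraph k),
        ∀ S ∈ BurlingFamily k, ∀ p : pd.ι, (S ∩ pd.bag p).encard ≤ 1 := by
  intro k _
  obtain ⟨pd, -, hpd⟩ := exists_pathDecomposition_burlingAux (k - 1)
  exact ⟨pd, hpd⟩
end

section
/- Every bipartite graph G admits two path-decompositions (P¹, {B¹_p}) and (P², {B²_q}) such that |B¹_p ∩ B²_q| ≤ 2 for every p ∈ V(P¹) and q ∈ V(P²); that is, every bipartite graph has 2-path-width at most 2. -/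
/-- For a set `S` whose complement is stable, the path-decomposition with one bag
`{p} ∪ S` for each vertex `p`. The order of the bags is irrelevant (any linear order of `V` is
used), because a vertex lies in every bag or in exactly one. Indexing by all of `V`, rather than
by the complement of `S`, keeps the index type nonempty when `S` is all of a nonempty `V`. -/
noncomputable def starDecomposition {V : Type} (G : SimpleGraph V) (S : Set V)
    (hSc : ∀ u ∉ S, ∀ v ∉ S, ¬ G.Adj u v) :
    PathDecomposition V G :=
  letI : LinearOrder V := IsWellOrder.linearOrder WellOrderingRel
  { ι := V
    bag := fun p => {p} ∪ S
    edge_mem := by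
      intro u v huv
      by_cases hu : u ∈ S
      · exact ⟨v, Or.inr hu, Or.inl rfl⟩
      · by_cases hv : v ∈ S
        · exact ⟨u, Or.inl rfl, Or.inr hv⟩
        · exact absurd huv (hSc u hu v hv)
    support_nonempty := fun v => ⟨v, Or.inl rfl⟩
    support_interval := by
      intro v
      by_cases hv : v ∈ S
      · have h : {p | v ∈ ({p} ∪ S : Set V)} = Set.univ := by ext; simp [hv]
        rw [h]
        exact Set.ordConnected_univ
      · have h : {p | v ∈ ({p} ∪ S : Set V)} = {v} := by ext; simp [hv, eq_comm]
        rw [h]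
        exact Set.ordConnected_singleton }

/-- Every bipartite graph `G` (vertex set partitioned into two stable
sets) admits two path-decompositions `(P¹, {B¹_p})` and `(P², {B²_q})` with
`|B¹_p ∩ B²_q| ≤ 2` for every `p ∈ V(P¹)` and `q ∈ V(P²)`; that is, every bipartite
graph has 2-path-width at most 2. -/
theorem bipartite_two_path_width_le_two :
    ∀ (V : Type) (G : SimpleGraph V),
      (∃ A B : Set V, A ∪ B = Set.univ ∧ A ∩ B = ∅ ∧
        (∀ u ∈ A, ∀ v ∈ A, ¬ G.Adj u v) ∧ (∀ u ∈ B, ∀ v ∈ B, ¬ G.Adj u v)) →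
      ∃ (pd₁ pd₂ : PathDecomposition V G),
        ∀ (p : pd₁.ι) (q : pd₂.ι), (pd₁.bag p ∩ pd₂.bag q).encard ≤ 2 := by
  rintro V G ⟨A, B, hU, hI, hA, hB⟩
  have hmem : ∀ x, x ∈ A ∨ x ∈ B := fun x => (hU ▸ Set.mem_univ x : x ∈ A ∪ B)
  refine ⟨starDecomposition G B fun u hu v hv =>
      hA u ((hmem u).resolve_right hu) v ((hmem v).resolve_right hv),
    starDecomposition G A fun u hu v hv =>
      hB u ((hmem u).resolve_left hu) v ((hmem v).resolve_left hv), ?_⟩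
  intro (p : V) (q : V)
  -- Since `A` and `B` are disjoint, `({p} ∪ B) ∩ ({q} ∪ A)` is contained in `{p, q}`.
  have hsub : (({p} ∪ B) ∩ ({q} ∪ A) : Set V) ⊆ {p, q} := by
    rintro x ⟨hx | hxB, hx' | hxA⟩
    · exact Or.inl hx
    · exact Or.inl hx
    · exact Or.inr hx'
    · exact absurd (show x ∈ A ∩ B from ⟨hxA, hxB⟩) (by simp [hI])
  calc _ ≤ ({p, q} : Set V).encard := Set.encard_le_encard hsub
    _ ≤ ({q} : Set V).encard + 1 := Set.encard_insert_le _ _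
    _ = 2 := by rw [Set.encard_singleton, one_add_one_eq_two]
end
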